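/- arXiv:1508.07206 — 4 statements merged into one kernel-verified Lean document; each statement's English description precedes it below -/
import Mathlib

section
/- Let ℓ be an odd prime, k a positive integer, and D an integer that is a quadratic nonresidue modulo ℓ. Let R_k = (ℤ/ℓᵏℤ)[X]/(X² − D) and let 𝒜ᵗ_{ℓᵏ,I} = {σ ∈ GL₂(R_k) | det σ lies in the image of (ℤ/ℓᵏℤ)^× and tr σ lies in the image of ℤ/ℓᵏℤ}. Then #𝒜ᵗ_{ℓᵏ,I} = ((ℓ−1)/(ℓ+1))·ℓ^{6k−2}·(ℓ² + ℓ + 1 − ℓ^{−2k}), i.e. (ℓ+1)·#𝒜ᵗ_{ℓᵏ,I} = (ℓ−1)·ℓ^{6k−2}·(ℓ² + ℓ + 1) − (ℓ−1)·ℓ^{4k−2}. -/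
open Matrix Polynomial

/-- The ring `R_k = (ℤ/ℓᵏℤ)[X]/(X² − D)`. -/
abbrev InertRing (ℓ k : ℕ) (D : ℤ) : Type :=
  AdjoinRoot ((X : Polynomial (ZMod (ℓ ^ k))) ^ 2 - C (D : ZMod (ℓ ^ k)))


lemma card_fib {G H : Type*} [AddGroup G] [AddGroup H] [Finite G] [Finite H] (f : G →+ H)
    (hf : Function.Surjective f) (S : Set H) :
    Nat.card (f ⁻¹' S) * Nat.card H = Nat.card S * Nat.card G := by
  obtain ⟨s, hs⟩ := hf.hasRightInverse
  have e : (f ⁻¹' S) ≃ S × f.ker :=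
    { toFun := fun x => (⟨f x, x.2⟩, ⟨x - s (f x), by simp [AddMonoidHom.mem_ker, hs (f x)]⟩)
      invFun := fun p => ⟨p.2 + s p.1, by
        have := AddMonoidHom.mem_ker.1 p.2.2
        simp [this, hs (p.1 : H)]⟩
      left_inv := fun x => by simp
      right_inv := fun p => by
        have := AddMonoidHom.mem_ker.1 p.2.2
        ext <;> simp [this, hs (p.1 : H)] }
  have e2 : G ≃ H × f.ker :=
    { toFun := fun x => (f x, ⟨x - s (f x), by simp [AddMonoidHom.mem_ker, hs (f x)]⟩)
      invFun := fun p => p.2 + s p.1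
      left_inv := fun x => by simp
      right_inv := fun p => by
        have := AddMonoidHom.mem_ker.1 p.2.2
        ext <;> simp [this, hs (p.1 : H)] }
  rw [Nat.card_congr e, Nat.card_congr e2, Nat.card_prod, Nat.card_prod]
  ring

lemma card_slice {α β : Type*} [Finite α] [Fintype β] (P : α → β → Prop) :
    Nat.card {p : α × β | P p.1 p.2} = ∑ b, Nat.card {a | P a b} := by
  have e : {p : α × β | P p.1 p.2} ≃ Σ b, {a | P a b} :=
    { toFun := fun p => ⟨p.1.2, ⟨p.1.1, p.2⟩⟩
      invFun := fun q => ⟨(q.2.1, q.1), q.2.2⟩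
      left_inv := fun _ => rfl
      right_inv := fun _ => rfl }
  rw [Nat.card_congr e, Nat.card_sigma]

/-- number of orthogonal pairs -/
noncomputable def SS (ℓ n : ℕ) : ℕ :=
  Nat.card {p : (Fin 3 → ZMod (ℓ ^ n)) × (Fin 3 → ZMod (ℓ ^ n)) | p.1 ⬝ᵥ p.2 = 0}

section
variable (ℓ : ℕ) [hp : Fact ℓ.Prime] (n : ℕ)

/-- multiplication by ℓ -/
noncomputable def psi : ZMod (ℓ ^ n) →+ ZMod (ℓ ^ (n+1)) :=
  ZMod.lift (ℓ ^ n) ⟨(AddMonoidHom.mulLeft (ℓ : ZMod (ℓ ^ (n+1)))).comp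
    (Int.castAddHom (ZMod (ℓ ^ (n+1)))), by
      have : ((ℓ ^ (n+1) : ℕ) : ZMod (ℓ ^ (n+1))) = 0 := ZMod.natCast_self _
      push_cast at this
      simp [← this, pow_succ']⟩

/-- reduction -/
noncomputable def red : ZMod (ℓ ^ (n+1)) →+* ZMod (ℓ ^ n) :=
  ZMod.castHom (pow_dvd_pow ℓ (Nat.le_succ n)) _

lemma psi_int (z : ℤ) : psi ℓ n (z : ZMod (ℓ ^ n)) = (ℓ : ZMod (ℓ ^ (n+1))) * z := by
  simp [psi]

lemma psi_inj : Function.Injective (psi ℓ n) := by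
  rw [injective_iff_map_eq_zero]
  intro a ha
  obtain ⟨z, rfl⟩ := ZMod.intCast_surjective a
  rw [psi_int] at ha
  have h : (((ℓ : ℤ) * z : ℤ) : ZMod (ℓ ^ (n+1))) = 0 := by push_cast; exact ha
  rw [ZMod.intCast_zmod_eq_zero_iff_dvd] at h ⊢
  push_cast at h ⊢
  rw [pow_succ'] at h
  exact Int.dvd_of_mul_dvd_mul_left (by exact_mod_cast hp.out.ne_zero) h

lemma psi_mul (x : ZMod (ℓ ^ n)) (y : ZMod (ℓ ^ (n+1))) : psi ℓ n x * y = psi ℓ n (x * red ℓ n y) := by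
  obtain ⟨z, rfl⟩ := ZMod.intCast_surjective x
  obtain ⟨w, rfl⟩ := ZMod.intCast_surjective y
  rw [map_intCast (red ℓ n), ← Int.cast_mul, psi_int, psi_int]
  push_cast; ring

lemma isUnit_int (z : ℤ) : IsUnit (z : ZMod (ℓ ^ (n+1))) ↔ (z : ZMod ℓ) ≠ 0 := by
  rw [Ne, ZMod.intCast_zmod_eq_zero_iff_dvd, ZMod.coe_int_isUnit_iff_isCoprime]
  push_cast
  rw [IsCoprime.pow_left_iff (Nat.succ_pos n), (Nat.prime_iff_prime_int.1 hp.out).coprime_iff_not_dvd]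

lemma nonunit (x : ZMod (ℓ ^ (n+1))) (h : ¬ IsUnit x) : ∃ y, psi ℓ n y = x := by
  obtain ⟨z, rfl⟩ := ZMod.intCast_surjective x
  rw [isUnit_int, not_not, ZMod.intCast_zmod_eq_zero_iff_dvd] at h
  obtain ⟨w, rfl⟩ := h
  exact ⟨w, by rw [psi_int]; push_cast; rfl⟩

lemma psi_nonunit (x : ZMod (ℓ ^ n)) : ¬ IsUnit (psi ℓ n x) := by
  obtain ⟨z, rfl⟩ := ZMod.intCast_surjective x
  rw [psi_int]
  intro h
  have := (isUnit_int ℓ n (ℓ * z)).1 (by push_cast; exact h)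
  simp at this

/-- psi on vectors -/
noncomputable def psi3 : (Fin 3 → ZMod (ℓ ^ n)) →  (Fin 3 → ZMod (ℓ ^ (n+1))) :=
  fun x i => psi ℓ n (x i)

lemma psi3_inj : Function.Injective (psi3 ℓ n) := fun x y h => by
  funext i; exact psi_inj ℓ n (congrFun h i)

lemma prim_or (x : Fin 3 → ZMod (ℓ ^ (n+1))) : (∃ i, IsUnit (x i)) ∨ ∃ y, psi3 ℓ n y = x := by
  by_cases h : ∃ i, IsUnit (x i)
  · exact Or.inl h
  · push Not at h
    choose y hy using fun i => nonunit ℓ n (x i) (h i)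
    exact Or.inr ⟨y, funext hy⟩

lemma cardV (m : ℕ) : Nat.card (Fin 3 → ZMod (ℓ ^ m)) = ℓ ^ (3 * m) := by
  rw [Nat.card_fun]; simp [pow_mul, mul_comm]

lemma card_orth_unit (x : Fin 3 → ZMod (ℓ ^ (n+1))) (h : ∃ i, IsUnit (x i)) :
    Nat.card {y | y ⬝ᵥ x = 0} = ℓ ^ (2 * (n+1)) := by
  obtain ⟨i, u, hu⟩ := h
  let f : (Fin 3 → ZMod (ℓ ^ (n+1))) →+ ZMod (ℓ ^ (n+1)) :=
    { toFun := fun y => y ⬝ᵥ x, map_zero' := by simp, map_add' := fun a b => by simp [add_dotProduct] }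
  have := card_fib f (fun a => ⟨Pi.single i (a * ↑u⁻¹), by simp [f, ← hu]⟩) {0}
  rw [cardV] at this
  have h2 : f ⁻¹' {0} = {y | y ⬝ᵥ x = 0} := by ext; simp [f]
  rw [h2] at this
  rw [Nat.card_zmod, Nat.card_coe_set_eq {0}, Set.ncard_singleton, one_mul] at this
  have hpos : 0 < ℓ ^ (n+1) := pow_pos hp.out.pos _
  apply Nat.eq_of_mul_eq_mul_right hpos
  rw [this]; ring

lemma card_orth_psi (x : Fin 3 → ZMod (ℓ ^ n)) :
    Nat.card {y | y ⬝ᵥ psi3 ℓ n x = 0} = ℓ ^ 3 * Nat.card {y | y ⬝ᵥ x = 0} := by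
  let f : (Fin 3 → ZMod (ℓ ^ (n+1))) →+ (Fin 3 → ZMod (ℓ ^ n)) :=
    { toFun := fun y i => red ℓ n (y i), map_zero' := by ext; simp,
      map_add' := fun a b => by ext; simp }
  have hs : Function.Surjective f := fun y => by
    choose z hz using fun i => ZMod.ringHom_surjective (red ℓ n) (y i)
    exact ⟨z, funext hz⟩
  have := card_fib f hs {y | y ⬝ᵥ x = 0}
  have h2 : f ⁻¹' {y | y ⬝ᵥ x = 0} = {y | y ⬝ᵥ psi3 ℓ n x = 0} := by
    ext y
    simp only [Set.mem_preimage, Set.mem_ofPred_eq]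
    rw [dotProduct_comm y, ← (psi_inj ℓ n).eq_iff, map_zero, dotProduct_comm]
    simp [dotProduct, psi3, psi_mul, f]
  rw [h2, cardV, cardV] at this
  have hpos : 0 < ℓ ^ (3*n) := pow_pos hp.out.pos _
  apply Nat.eq_of_mul_eq_mul_right hpos
  rw [this]; ring

lemma SS_succ : SS ℓ (n+1) + ℓ ^ (5 * n + 2) = ℓ ^ (5 * n + 5) + ℓ ^ 3 * SS ℓ n := by
  classical
  have h1 : SS ℓ (n+1) = ∑ x : Fin 3 → ZMod (ℓ ^ (n+1)), Nat.card {y | y ⬝ᵥ x = 0} := card_slice (fun y x => y ⬝ᵥ x = 0)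
  have h0 : SS ℓ n = ∑ x : Fin 3 → ZMod (ℓ ^ n), Nat.card {y | y ⬝ᵥ x = 0} := card_slice (fun y x => y ⬝ᵥ x = 0)
  let I : Finset (Fin 3 → ZMod (ℓ ^ (n+1))) := Finset.univ.image (psi3 ℓ n)
  rw [h1, h0, ← Finset.sum_add_sum_compl I, Finset.sum_image (fun _ _ _ _ h => psi3_inj ℓ n h)]
  have h3 : ∑ x ∈ Iᶜ, Nat.card {y | y ⬝ᵥ x = 0} = ∑ x ∈ Iᶜ, ℓ ^ (2 * (n+1)) := by
    apply Finset.sum_congr rfl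
    intro x hx
    apply card_orth_unit
    rcases prim_or ℓ n x with h | h
    · exact h
    · simp [I] at hx
      obtain ⟨y, hy⟩ := h
      exact absurd hy (hx y)
  have hI : I.card = ℓ ^ (3 * n) := by
    rw [Finset.card_image_of_injective _ (psi3_inj ℓ n), Finset.card_univ, ← Nat.card_eq_fintype_card, cardV]
  have hT : I.card + Iᶜ.card = ℓ ^ (3 * (n+1)) := by
    rw [Finset.card_add_card_compl, ← Nat.card_eq_fintype_card, cardV]
  rw [h3, Finset.sum_const, smul_eq_mul]
  simp_rw [card_orth_psi]
  rw [← Finset.mul_sum]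
  rw [hI] at hT
  have : Iᶜ.card * ℓ ^ (2 * (n+1)) + ℓ ^ (5 * n + 2) = ℓ ^ (5 * n + 5) := by
    calc _ = (ℓ ^ (3*n) + Iᶜ.card) * ℓ ^ (2 * (n+1)) := by ring
      _ = _ := by rw [hT]; ring
  omega

lemma SS_formula : (ℓ + 1) * SS ℓ n * ℓ + ℓ ^ (3 * n) = ℓ ^ (5 * n) * (ℓ ^ 2 + ℓ + 1) := by
  induction n with
  | zero => 
    have : SS ℓ 0 = 1 := by
      have : Subsingleton (ZMod (ℓ ^ 0)) := by rw [pow_zero]; infer_instance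
      rw [SS, Nat.card_coe_set_eq]
      have h : {p : (Fin 3 → ZMod (ℓ ^ 0)) × (Fin 3 → ZMod (ℓ ^ 0)) | p.1 ⬝ᵥ p.2 = 0} = {(0, 0)} := by
        ext p
        rw [Subsingleton.elim p (0, 0), Set.mem_ofPred_eq, Set.mem_singleton_iff]
        exact ⟨fun _ => rfl, fun _ => Subsingleton.elim _ _⟩
      rw [h, Set.ncard_singleton]
    rw [this]; ring
  | succ n ih =>
    have := SS_succ ℓ n
    zify at *
    linear_combination (ℓ+1) * ℓ * this + ℓ^3 * ih

lemma isUnit_red (hn : ℓ ∣ ℓ ^ (n+1)) (x : ZMod (ℓ ^ (n+1))) :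
    IsUnit x ↔ ZMod.castHom hn (ZMod ℓ) x ≠ 0 := by
  obtain ⟨z, rfl⟩ := ZMod.intCast_surjective x
  rw [isUnit_int, map_intCast]

lemma card_sq (hodd : ℓ ≠ 2) (D : ℤ) (hD : ¬ IsSquare (D : ZMod ℓ)) (m : ZMod ℓ) :
    Nat.card {t : ZMod ℓ | t ^ 2 - m ≠ 0} + Nat.card {t : ZMod ℓ | t ^ 2 - D * m ≠ 0} 
      = 2 * (ℓ - 1) := by
  classical
  have hc : ringChar (ZMod ℓ) ≠ 2 := by rwa [ZMod.ringChar_zmod_n]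
  have key (a : ZMod ℓ) : (Nat.card {t : ZMod ℓ | t ^ 2 - a ≠ 0} : ℤ) = ℓ - 1 - quadraticChar (ZMod ℓ) a := by
    have h := quadraticChar_card_sqrts hc a
    have h2 : {t : ZMod ℓ | t ^ 2 - a ≠ 0} = ({x : ZMod ℓ | x ^ 2 = a})ᶜ := by ext; simp [sub_eq_zero]
    have h3 := Set.ncard_add_ncard_compl {x : ZMod ℓ | x ^ 2 = a}
    rw [h2, Nat.card_coe_set_eq]
    rw [← Set.ncard_eq_toFinset_card'] at h
    simp only [Nat.card_zmod] at h3
    omega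
  have hq : quadraticChar (ZMod ℓ) D = -1 := quadraticChar_neg_one_iff_not_isSquare.2 hD
  have h1 := key m
  have h2 := key (D * m)
  rw [map_mul, hq] at h2
  have := hp.out.pos
  omega

lemma card_sq_lift (hodd : ℓ ≠ 2) (D : ℤ) (hD : ¬ IsSquare (D : ZMod ℓ)) (m : ZMod (ℓ ^ (n+1))) :
    Nat.card {t : ZMod (ℓ ^ (n+1)) | IsUnit (t ^ 2 - m)} + 
    Nat.card {t : ZMod (ℓ ^ (n+1)) | IsUnit (t ^ 2 - D * m)} = 2 * ((ℓ - 1) * ℓ ^ n) := by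
  have hn : ℓ ∣ ℓ ^ (n+1) := Dvd.intro_left (ℓ ^ n) rfl
  let f := ZMod.castHom hn (ZMod ℓ)
  have hf : Function.Surjective f.toAddMonoidHom := ZMod.ringHom_surjective f
  have key (a : ZMod (ℓ ^ (n+1))) : Nat.card {t : ZMod (ℓ ^ (n+1)) | IsUnit (t ^ 2 - a)} =
      ℓ ^ n * Nat.card {t : ZMod ℓ | t ^ 2 - f a ≠ 0} := by
    have h := card_fib f.toAddMonoidHom hf {t : ZMod ℓ | t ^ 2 - f a ≠ 0}
    have h2 : f.toAddMonoidHom ⁻¹' {t : ZMod ℓ | t ^ 2 - f a ≠ 0} = {t : ZMod (ℓ ^ (n+1)) | IsUnit (t ^ 2 - a)} := by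
      ext t
      simp only [Set.mem_preimage, Set.mem_ofPred_eq]
      rw [isUnit_red ℓ n hn, map_sub, map_pow]; rfl
    rw [h2, Nat.card_zmod, Nat.card_zmod] at h
    apply Nat.eq_of_mul_eq_mul_right hp.out.pos
    rw [h]; ring
  rw [key, key, ← mul_add, map_mul, map_intCast, card_sq ℓ hodd D hD]
  ring
end

/-- The quadratic form giving the rational part of the (negated) determinant. -/
def mm {A : Type*} [CommRing A] (D : ℤ) (h : A) (p : (Fin 3 → A) × (Fin 3 → A)) : A :=
  h ^ 2 * p.1 0 ^ 2 + D * p.2 0 ^ 2 + p.1 1 * p.2 2 + D * p.1 2 * p.2 1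

/-- Multiplication by the square root of `D`. -/
def alphaMul {A : Type*} [CommRing A] (D : ℤ) (h : A) (p : (Fin 3 → A) × (Fin 3 → A)) :
    (Fin 3 → A) × (Fin 3 → A) :=
  (![2 * D * p.2 0, D * p.1 2, p.1 1], ![h * p.1 0, p.2 2, D * p.2 1])

lemma alphaMul_inj {A : Type*} [CommRing A] (D : ℤ) (h : A) (h2 : 2 * h = 1)
    (hD : IsUnit (D : A)) : Function.Injective (alphaMul D h) := by
  rintro ⟨x, y⟩ ⟨x', y'⟩ e
  simp only [alphaMul, Prod.mk.injEq] at e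
  obtain ⟨e1, e2⟩ := e
  have a0 := congrFun e1 0
  have a1 := congrFun e1 1
  have a2 := congrFun e1 2
  have b0 := congrFun e2 0
  have b1 := congrFun e2 1
  have b2 := congrFun e2 2
  simp at a0 a1 a2 b0 b1 b2
  have c0 : y 0 = y' 0 := hD.mul_left_cancel (by linear_combination h * a0 - D * (y 0 - y' 0) * h2)
  have c1 : x 2 = x' 2 := hD.mul_left_cancel a1
  have c2 : y 1 = y' 1 := hD.mul_left_cancel b2
  have c3 : x 0 = x' 0 := by linear_combination 2 * b0 - (x 0 - x' 0) * h2
  ext i <;> fin_cases i <;> simp [*]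

lemma alphaMul_dot {A : Type*} [CommRing A] (D : ℤ) (h : A) (h2 : 2 * h = 1) (p) :
    (alphaMul D h p).1 ⬝ᵥ (alphaMul D h p).2 = D * (p.1 ⬝ᵥ p.2) := by
  simp [alphaMul, dotProduct, Fin.sum_univ_three]
  linear_combination D * p.1 0 * p.2 0 * h2

lemma alphaMul_mm {A : Type*} [CommRing A] (D : ℤ) (h : A) (h2 : 2 * h = 1) (p) :
    mm D h (alphaMul D h p) = D * mm D h p := by
  simp [alphaMul, mm]
  linear_combination D ^ 2 * p.2 0 ^ 2 * (2 * h + 1) * h2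

section
variable (ℓ : ℕ) [hp : Fact ℓ.Prime] (n : ℕ)

lemma card_tuples (hodd : ℓ ≠ 2) (D : ℤ) (hD : ¬ IsSquare (D : ZMod ℓ))
    (h : ZMod (ℓ ^ (n+1))) (h2 : 2 * h = 1) :
    Nat.card {p : ZMod (ℓ ^ (n+1)) × ((Fin 3 → ZMod (ℓ ^ (n+1))) × (Fin 3 → ZMod (ℓ ^ (n+1)))) |
      p.2.1 ⬝ᵥ p.2.2 = 0 ∧ IsUnit (p.1 ^ 2 - mm D h p.2)} = (ℓ - 1) * ℓ ^ n * SS ℓ (n+1) := by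
  classical
  have hDu : IsUnit (D : ZMod (ℓ ^ (n+1))) := by
    rw [isUnit_int]
    intro h0
    exact hD (h0 ▸ IsSquare.zero)
  rw [card_slice (fun t (v : (Fin 3 → ZMod (ℓ ^ (n+1))) × (Fin 3 → ZMod (ℓ ^ (n+1)))) =>
    v.1 ⬝ᵥ v.2 = 0 ∧ IsUnit (t ^ 2 - mm D h v))]
  let F : (Fin 3 → ZMod (ℓ ^ (n+1))) × (Fin 3 → ZMod (ℓ ^ (n+1))) → ℕ := fun v =>
    Nat.card {t : ZMod (ℓ ^ (n+1)) | v.1 ⬝ᵥ v.2 = 0 ∧ IsUnit (t ^ 2 - mm D h v)}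
  change ∑ v, F v = _
  have hb : Function.Bijective (alphaMul D h) :=
    Finite.injective_iff_bijective.1 (alphaMul_inj D h h2 hDu)
  have h1 : ∑ v, F (alphaMul D h v) = ∑ v, F v := hb.sum_comp F
  have h3 : ∀ v, F v + F (alphaMul D h v) =
      if v.1 ⬝ᵥ v.2 = 0 then 2 * ((ℓ - 1) * ℓ ^ n) else 0 := by
    intro v
    simp only [F, alphaMul_dot D h h2, alphaMul_mm D h h2, hDu.mul_right_eq_zero]
    split_ifs with hv
    · simp only [hv, true_and]
      exact card_sq_lift ℓ n hodd D hD _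
    · simp [hv]
  have h4 : ∑ v, F v + ∑ v, F (alphaMul D h v) = 2 * ((ℓ - 1) * ℓ ^ n) * SS ℓ (n+1) := by
    rw [← Finset.sum_add_distrib, Finset.sum_congr rfl (fun v _ => h3 v), Finset.sum_ite,
      Finset.sum_const, Finset.sum_const_zero, add_zero, smul_eq_mul, mul_comm, SS,
      Nat.card_eq_fintype_card, ← Set.toFinset_card]
    congr 2
    ext; simp
  rw [h1] at h4
  linarith
end

lemma inert_inj (ℓ k : ℕ) (D : ℤ) [Nontrivial (ZMod (ℓ ^ k))] (a b a' b' : ZMod (ℓ ^ k))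
    (h : (algebraMap _ (InertRing ℓ k D) a) + algebraMap _ (InertRing ℓ k D) b * AdjoinRoot.root _ =
     (algebraMap _ (InertRing ℓ k D) a') + algebraMap _ (InertRing ℓ k D) b' * AdjoinRoot.root _) :
    a = a' ∧ b = b' := by
  have h1 : AdjoinRoot.mk ((X : Polynomial (ZMod (ℓ ^ k))) ^ 2 - C (D : ZMod (ℓ ^ k)))
      (C (a - a') + C (b - b') * X) = 0 := by
    simp only [map_add, map_sub, map_mul, AdjoinRoot.mk_C, AdjoinRoot.mk_X]
    simp only [AdjoinRoot.algebraMap_eq] at h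
    linear_combination h
  rw [AdjoinRoot.mk_eq_zero] at h1
  have hm : ((X : Polynomial (ZMod (ℓ ^ k))) ^ 2 - C (D : ZMod (ℓ ^ k))).Monic :=
    monic_X_pow_sub_C _ (by norm_num)
  have h0 : C (a - a') + C (b - b') * X = (0 : Polynomial (ZMod (ℓ ^ k))) := by
    by_contra hne
    refine hm.not_dvd_of_degree_lt hne ?_ h1
    rw [degree_X_pow_sub_C (by norm_num), add_comm]
    exact lt_of_le_of_lt degree_linear_le (by norm_num)
  have e0 := congrArg (fun p => coeff p 0) h0
  have e1 := congrArg (fun p => coeff p 1) h0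
  simp [coeff_C] at e0 e1
  exact ⟨sub_eq_zero.1 e0, sub_eq_zero.1 e1⟩

lemma inert_surj (ℓ k : ℕ) (D : ℤ) [Nontrivial (ZMod (ℓ ^ k))] (r : InertRing ℓ k D) :
    ∃ a b : ZMod (ℓ ^ k), r = (algebraMap _ (InertRing ℓ k D) a) +
      algebraMap _ (InertRing ℓ k D) b * AdjoinRoot.root _ := by
  obtain ⟨p, rfl⟩ := AdjoinRoot.mk_surjective r
  have hm : ((X : Polynomial (ZMod (ℓ ^ k))) ^ 2 - C (D : ZMod (ℓ ^ k))).Monic :=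
    monic_X_pow_sub_C _ (by norm_num)
  have hd := degree_modByMonic_lt p hm
  rw [degree_X_pow_sub_C (by norm_num)] at hd
  have hd1 : (p %ₘ (X ^ 2 - C (D : ZMod (ℓ ^ k)))).degree ≤ 1 := Order.le_of_lt_succ hd
  have h2 := eq_X_add_C_of_degree_le_one hd1
  have h3 := modByMonic_add_div p (X ^ 2 - C (D : ZMod (ℓ ^ k)))
  refine ⟨(p %ₘ (X ^ 2 - C (D : ZMod (ℓ ^ k)))).coeff 0,
    (p %ₘ (X ^ 2 - C (D : ZMod (ℓ ^ k)))).coeff 1, ?_⟩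
  have h4 := congrArg (AdjoinRoot.mk (X ^ 2 - C (D : ZMod (ℓ ^ k)))) h2
  have h5 := congrArg (AdjoinRoot.mk (X ^ 2 - C (D : ZMod (ℓ ^ k)))) h3
  rw [map_add, map_mul, AdjoinRoot.mk_self, zero_mul, add_zero] at h5
  rw [map_add, map_mul, AdjoinRoot.mk_C, AdjoinRoot.mk_C, AdjoinRoot.mk_X, add_comm] at h4
  exact h5.symm.trans h4

lemma root_sq (ℓ k : ℕ) (D : ℤ) :
    (AdjoinRoot.root ((X : Polynomial (ZMod (ℓ ^ k))) ^ 2 - C (D : ZMod (ℓ ^ k)))) ^ 2 =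
      algebraMap (ZMod (ℓ ^ k)) (InertRing ℓ k D) (D : ZMod (ℓ ^ k)) := by
  have := AdjoinRoot.mk_self (f := (X : Polynomial (ZMod (ℓ ^ k))) ^ 2 - C (D : ZMod (ℓ ^ k)))
  rw [map_sub, map_pow, AdjoinRoot.mk_X, AdjoinRoot.mk_C, sub_eq_zero] at this
  exact this

/-- The matrix attached to a tuple. -/
noncomputable def mat (ℓ k : ℕ) (D : ℤ) (h : ZMod (ℓ ^ k))
    (p : ZMod (ℓ ^ k) × ((Fin 3 → ZMod (ℓ ^ k)) × (Fin 3 → ZMod (ℓ ^ k)))) :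
    Matrix (Fin 2) (Fin 2) (InertRing ℓ k D) :=
  let o := algebraMap (ZMod (ℓ ^ k)) (InertRing ℓ k D)
  let r := AdjoinRoot.root ((X : Polynomial (ZMod (ℓ ^ k))) ^ 2 - C (D : ZMod (ℓ ^ k)))
  !![o (p.1 + h * p.2.1 0) + o (p.2.2 0) * r, o (p.2.1 1) + o (p.2.1 2) * r;
     o (p.2.2 2) + o (p.2.2 1) * r, o (p.1 - h * p.2.1 0) + o (- p.2.2 0) * r]

lemma mat_det (ℓ k : ℕ) (D : ℤ) (h : ZMod (ℓ ^ k)) (h2 : 2 * h = 1) (p) :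
    (mat ℓ k D h p).det = algebraMap (ZMod (ℓ ^ k)) (InertRing ℓ k D) (p.1 ^ 2 - mm D h p.2) +
      algebraMap (ZMod (ℓ ^ k)) (InertRing ℓ k D) (- (p.2.1 ⬝ᵥ p.2.2)) * AdjoinRoot.root _ := by
  have hr := root_sq ℓ k D
  have h2' := congrArg (algebraMap (ZMod (ℓ ^ k)) (InertRing ℓ k D)) h2
  simp only [mat, Matrix.det_fin_two_of, mm, dotProduct, Fin.sum_univ_three]
  simp only [map_add, map_sub, map_mul, map_neg, map_pow, map_one, map_ofNat] at h2' ⊢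
  generalize AdjoinRoot.root ((X : Polynomial (ZMod (ℓ ^ k))) ^ 2 - C (D : ZMod (ℓ ^ k))) = r at *
  generalize algebraMap (ZMod (ℓ ^ k)) (InertRing ℓ k D) = o at *
  linear_combination (- o (p.2.2 0) ^ 2 - o (p.2.1 2) * o (p.2.2 1)) * hr - o (p.2.1 0) * o (p.2.2 0) * r * h2'

lemma mat_trace (ℓ k : ℕ) (D : ℤ) (h : ZMod (ℓ ^ k)) (p) :
    (mat ℓ k D h p).trace = algebraMap (ZMod (ℓ ^ k)) (InertRing ℓ k D) (2 * p.1) := by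
  simp only [mat, Matrix.trace_fin_two_of, map_add, map_sub, map_mul, map_neg, map_ofNat]
  ring

lemma mat_inj (ℓ k : ℕ) (D : ℤ) [Nontrivial (ZMod (ℓ ^ k))] (h : ZMod (ℓ ^ k)) (h2 : 2 * h = 1) :
    Function.Injective (mat ℓ k D h) := by
  rintro ⟨t, x, y⟩ ⟨t', x', y'⟩ e
  have e00 := inert_inj _ _ _ _ _ _ _ (congrFun (congrFun e 0) 0)
  have e01 := inert_inj _ _ _ _ _ _ _ (congrFun (congrFun e 0) 1)
  have e10 := inert_inj _ _ _ _ _ _ _ (congrFun (congrFun e 1) 0)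
  have e11 := inert_inj _ _ _ _ _ _ _ (congrFun (congrFun e 1) 1)
  simp only at e00 e01 e10 e11
  obtain ⟨a, b⟩ := e00
  obtain ⟨c, d⟩ := e01
  obtain ⟨f, g⟩ := e10
  have i := e11.1
  have ht : t = t' := by linear_combination h * (a + i) - (t - t') * h2
  have hx : x 0 = x' 0 := by linear_combination a - i - (x 0 - x' 0) * h2
  subst ht
  ext i <;> try fin_cases i <;> simp [*]
  simp

lemma mat_surj (ℓ k : ℕ) (D : ℤ) [Nontrivial (ZMod (ℓ ^ k))] (h : ZMod (ℓ ^ k)) (h2 : 2 * h = 1)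
    (M : Matrix (Fin 2) (Fin 2) (InertRing ℓ k D)) (z : ZMod (ℓ ^ k))
    (hz : M.trace = algebraMap (ZMod (ℓ ^ k)) (InertRing ℓ k D) z) : ∃ p, mat ℓ k D h p = M := by
  obtain ⟨a, a', ha⟩ := inert_surj ℓ k D (M 0 0)
  obtain ⟨b, b', hb⟩ := inert_surj ℓ k D (M 0 1)
  obtain ⟨c, c', hc⟩ := inert_surj ℓ k D (M 1 0)
  obtain ⟨d, d', hd⟩ := inert_surj ℓ k D (M 1 1)
  have h1 := inert_inj ℓ k D (a + d) (a' + d') z 0 (by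
    rw [Matrix.trace_fin_two, ha, hd] at hz
    simp only [map_add, map_zero]
    linear_combination hz)
  have hd' : d' = -a' := by linear_combination h1.2
  refine ⟨(h * (a + d), ![a - d, b, b'], ![a', c', c]), ?_⟩
  have e1 : h * (a + d) + h * (a - d) = a := by linear_combination a * h2
  have e2 : h * (a + d) - h * (a - d) = d := by linear_combination d * h2
  ext i j
  fin_cases i <;> fin_cases j <;> simp [mat, ha, hb, hc, hd, hd', -map_add, -map_sub, e1, e2]

lemma card_good (ℓ k : ℕ) (D : ℤ) [Nontrivial (ZMod (ℓ ^ k))] (h : ZMod (ℓ ^ k)) (h2 : 2 * h = 1) :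
    Nat.card {σ : GL (Fin 2) (InertRing ℓ k D) |
        (∃ u : (ZMod (ℓ ^ k))ˣ,
          (σ : Matrix (Fin 2) (Fin 2) (InertRing ℓ k D)).det =
            algebraMap (ZMod (ℓ ^ k)) (InertRing ℓ k D) (u : ZMod (ℓ ^ k))) ∧
        ∃ z : ZMod (ℓ ^ k),
          (σ : Matrix (Fin 2) (Fin 2) (InertRing ℓ k D)).trace =
            algebraMap (ZMod (ℓ ^ k)) (InertRing ℓ k D) z} =
    Nat.card {p : ZMod (ℓ ^ k) × ((Fin 3 → ZMod (ℓ ^ k)) × (Fin 3 → ZMod (ℓ ^ k))) |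
      p.2.1 ⬝ᵥ p.2.2 = 0 ∧ IsUnit (p.1 ^ 2 - mm D h p.2)} := by
  simp only [Nat.card_coe_set_eq]
  symm
  have hdet (p : ZMod (ℓ ^ k) × ((Fin 3 → ZMod (ℓ ^ k)) × (Fin 3 → ZMod (ℓ ^ k))))
      (hp : p.2.1 ⬝ᵥ p.2.2 = 0) :
      (mat ℓ k D h p).det = algebraMap (ZMod (ℓ ^ k)) (InertRing ℓ k D) (p.1 ^ 2 - mm D h p.2) := by
    rw [mat_det _ _ _ _ h2, hp, neg_zero, map_zero, zero_mul, add_zero]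
  have hun (p : ZMod (ℓ ^ k) × ((Fin 3 → ZMod (ℓ ^ k)) × (Fin 3 → ZMod (ℓ ^ k))))
      (hp : p.2.1 ⬝ᵥ p.2.2 = 0 ∧ IsUnit (p.1 ^ 2 - mm D h p.2)) : IsUnit (mat ℓ k D h p).det := by
    rw [hdet p hp.1]; exact hp.2.map _
  refine Set.ncard_congr (fun p hp => Matrix.GeneralLinearGroup.mk'' (mat ℓ k D h p) (hun p hp))
    ?_ ?_ ?_
  · intro p hp
    exact ⟨⟨hp.2.unit, hdet p hp.1⟩, ⟨_, mat_trace _ _ _ _ _⟩⟩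
  · intro p q hp hq e
    apply mat_inj ℓ k D h h2
    exact congrArg (fun s : GL (Fin 2) (InertRing ℓ k D) => (s : Matrix (Fin 2) (Fin 2) (InertRing ℓ k D))) e
  · rintro σ ⟨⟨u, hu⟩, z, hz⟩
    obtain ⟨p, hp⟩ := mat_surj ℓ k D h h2 _ z hz
    rw [← hp, mat_det _ _ _ _ h2] at hu
    have h3 := inert_inj ℓ k D _ _ u 0 (by rw [hu, map_zero, zero_mul, add_zero])
    refine ⟨p, ⟨neg_eq_zero.1 h3.2, ?_⟩, ?_⟩
    · rw [h3.1]; exact u.isUnit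
    · apply Units.ext
      exact hp

/-- For an odd prime `ℓ`, `k ≥ 1` and `D` a quadratic nonresidue modulo `ℓ`,
the set `𝒜ᵗ_{ℓᵏ,I}` of `σ ∈ GL₂(R_k)` whose determinant lies in the image of
`(ℤ/ℓᵏℤ)ˣ` and whose trace lies in the image of `ℤ/ℓᵏℤ` satisfies
`(ℓ+1) · #𝒜ᵗ_{ℓᵏ,I} = (ℓ−1)·ℓ^(6k−2)·(ℓ² + ℓ + 1) − (ℓ−1)·ℓ^(4k−2)`. -/
theorem stmt_3 (ℓ k : ℕ) (hℓ : ℓ.Prime) (hodd : ℓ ≠ 2) (hk : 1 ≤ k) (D : ℤ)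
    (hD : ¬ IsSquare (D : ZMod ℓ)) :
    (ℓ + 1) *
      Nat.card {σ : GL (Fin 2) (InertRing ℓ k D) |
        (∃ u : (ZMod (ℓ ^ k))ˣ,
          (σ : Matrix (Fin 2) (Fin 2) (InertRing ℓ k D)).det =
            algebraMap (ZMod (ℓ ^ k)) (InertRing ℓ k D) (u : ZMod (ℓ ^ k))) ∧
        ∃ z : ZMod (ℓ ^ k),
          (σ : Matrix (Fin 2) (Fin 2) (InertRing ℓ k D)).trace =
            algebraMap (ZMod (ℓ ^ k)) (InertRing ℓ k D) z} =
      (ℓ - 1) * ℓ ^ (6 * k - 2) * (ℓ ^ 2 + ℓ + 1) - (ℓ - 1) * ℓ ^ (4 * k - 2) := by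
  have : Fact ℓ.Prime := ⟨hℓ⟩
  obtain ⟨n, rfl⟩ : ∃ n, k = n + 1 := ⟨k - 1, by omega⟩
  have : Nontrivial (ZMod (ℓ ^ (n+1))) := by
    have : Fact (1 < ℓ ^ (n+1)) := ⟨Nat.one_lt_pow (by omega) hℓ.one_lt⟩
    infer_instance
  have hu2 : IsUnit (2 : ZMod (ℓ ^ (n+1))) := by
    have := (isUnit_int ℓ n 2).2 (by
      intro h0
      rw [ZMod.intCast_zmod_eq_zero_iff_dvd] at h0
      have : ℓ ∣ 2 := by exact_mod_cast h0
      exact hodd ((Nat.prime_dvd_prime_iff_eq hℓ Nat.prime_two).1 this))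
    exact_mod_cast this
  obtain ⟨h, h2⟩ := hu2.exists_right_inv
  rw [card_good ℓ (n+1) D h h2, card_tuples ℓ n hodd D hD h h2]
  have hS := SS_formula ℓ (n+1)
  obtain ⟨m, rfl⟩ : ∃ m, ℓ = m + 1 := ⟨ℓ - 1, by have := hℓ.pos; omega⟩
  have e1 : 6 * (n+1) - 2 = 6 * n + 4 := by omega
  have e2 : 4 * (n+1) - 2 = 4 * n + 2 := by omega
  rw [e1, e2, Nat.add_sub_cancel]
  symm
  apply Nat.sub_eq_of_eq_add
  apply Nat.eq_of_mul_eq_mul_right (Nat.succ_pos m)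
  zify at *
  linear_combination (-(m : ℤ)) * (m+1) ^ n * hS
end

section
/- Let ℓ be an odd prime and k a positive integer. Let 𝒜ᵗ_{ℓᵏ,S} = {(τ, τ') ∈ GL₂(ℤ/ℓᵏℤ)² | τ and τ' have the same characteristic polynomial}. Then #𝒜ᵗ_{ℓᵏ,S} = ((ℓ−1)/(ℓ+1))·ℓ^{6k−4}·(ℓ⁴ + ℓ³ − ℓ² − 2ℓ − ℓ^{−2k+2}), i.e. (ℓ+1)·#𝒜ᵗ_{ℓᵏ,S} = (ℓ−1)·ℓ^{6k−4}·(ℓ⁴ + ℓ³ − ℓ² − 2ℓ) − (ℓ−1)·ℓ^{4k−2}. -/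
open Matrix

namespace Aux
open Finset

/-- Indicator of a proposition. -/
noncomputable def ind (P : Prop) : ℤ := by
  classical
  exact if P then 1 else 0

lemma ind_pos {P : Prop} (h : P) : ind P = 1 := by simp [ind, h]
lemma ind_neg {P : Prop} (h : ¬ P) : ind P = 0 := by simp [ind, h]
lemma ind_eq (P : Prop) [Decidable P] : ind P = if P then 1 else 0 := by
  by_cases h : P <;> simp [ind, h]

section ring
variable {ℓ k : ℕ}

lemma unit_iff (hℓ : ℓ.Prime) (hk : 1 ≤ k) (r : ZMod (ℓ ^ k)) :
    IsUnit r ↔ ¬ (ℓ : ZMod (ℓ ^ k)) ∣ r := by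
  have : NeZero (ℓ ^ k) := ⟨(pow_pos hℓ.pos k).ne'⟩
  obtain ⟨n, rfl⟩ : ∃ n : ℕ, (n : ZMod (ℓ ^ k)) = r := ⟨r.val, by simp⟩
  rw [ZMod.isUnit_iff_coprime, Nat.coprime_pow_right_iff (by omega), Nat.coprime_comm,
    hℓ.coprime_iff_not_dvd, not_iff_not]
  constructor
  · rintro ⟨c, rfl⟩
    exact ⟨c, by push_cast; rfl⟩
  · rintro ⟨c, hc⟩
    obtain ⟨m, rfl⟩ : ∃ m : ℕ, (m : ZMod (ℓ ^ k)) = c := ⟨c.val, by simp⟩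
    rw [← Nat.cast_mul, ZMod.natCast_eq_natCast_iff] at hc
    have h2 : n ≡ ℓ * m [MOD ℓ] := hc.of_dvd (dvd_pow_self ℓ (by omega))
    exact (Nat.ModEq.dvd_iff h2 dvd_rfl).2 (dvd_mul_right _ _)

lemma dvd_or (hℓ : ℓ.Prime) (hk : 1 ≤ k) (r : ZMod (ℓ ^ k)) (j : ℕ) :
    (ℓ : ZMod (ℓ ^ k)) ^ j ∣ r ∨ ∃ i < j, ∃ u, IsUnit u ∧ r = (ℓ : ZMod (ℓ ^ k)) ^ i * u := by
  induction j with
  | zero => simp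
  | succ j ih =>
    rcases ih with ⟨c, hc⟩ | ⟨i, hi, h⟩
    · by_cases hu : IsUnit c
      · exact Or.inr ⟨j, by omega, c, hu, hc⟩
      · rw [unit_iff hℓ hk, not_not] at hu
        left
        rw [hc, pow_succ]
        exact mul_dvd_mul_left _ hu
    · exact Or.inr ⟨i, by omega, h⟩

lemma ex_mul (hℓ : ℓ.Prime) (hk : 1 ≤ k) (r : ZMod (ℓ ^ k)) (j : ℕ)
    (h : ¬ (ℓ : ZMod (ℓ ^ k)) ^ j ∣ r) :
    ∃ s, (ℓ : ZMod (ℓ ^ k)) ∣ s ∧ r * s = (ℓ : ZMod (ℓ ^ k)) ^ j := by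
  rcases dvd_or hℓ hk r j with h1 | ⟨i, hi, u, ⟨u, rfl⟩, rfl⟩
  · exact absurd h1 h
  · refine ⟨(ℓ : ZMod (ℓ ^ k)) ^ (j - i) * (↑u⁻¹ : ZMod (ℓ ^ k)), ?_, ?_⟩
    · exact Dvd.dvd.mul_right (dvd_pow_self _ (by omega)) _
    · have : (ℓ : ZMod (ℓ ^ k)) ^ j = ℓ ^ i * ℓ ^ (j - i) := by
        rw [← pow_add]; congr 1; omega
      rw [this, mul_mul_mul_comm, mul_comm (u : ZMod (ℓ ^ k))]
      rw [mul_assoc]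
      simp

lemma pow_ne (hℓ : ℓ.Prime) (j : ℕ) (hj : j < k) : (ℓ : ZMod (ℓ ^ k)) ^ j ≠ 0 := by
  rw [← Nat.cast_pow, Ne, ZMod.natCast_eq_zero_iff, Nat.pow_dvd_pow_iff_le_right hℓ.one_lt]
  omega

lemma uniq (hℓ : ℓ.Prime) (j : ℕ) (hj : j < k) (t : ℕ) 
    (h : (ℓ : ZMod (ℓ ^ k)) ^ (j+1) ∣ t * (ℓ : ZMod (ℓ ^ k)) ^ j) : ℓ ∣ t := by
  by_contra hc
  have hu : IsUnit (t : ZMod (ℓ ^ k)) := by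
    rw [ZMod.isUnit_iff_coprime]
    exact Nat.Coprime.pow_right _ (((Nat.Prime.coprime_iff_not_dvd hℓ).2 hc).symm)
  rw [hu.dvd_mul_left] at h
  obtain ⟨c, h⟩ := h
  have h1 : (ℓ : ZMod (ℓ ^ k)) ^ j * (1 - ℓ * c) = 0 := by linear_combination h
  have h2 : IsUnit (1 - ℓ * c) := by
    rw [unit_iff hℓ (by omega)]
    intro h3
    have : (ℓ : ZMod (ℓ ^ k)) ∣ 1 := by
      have := dvd_add h3 (dvd_mul_right (ℓ : ZMod (ℓ ^ k)) c)
      simpa using this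
    exact (unit_iff hℓ (by omega) (1 : ZMod (ℓ ^ k))).1 isUnit_one this
  exact pow_ne hℓ j hj ((h2.mul_left_eq_zero).1 h1)

lemma split (hℓ : ℓ.Prime) (j : ℕ) (hj : j < k) (r : ZMod (ℓ ^ k)) :
    ind ((ℓ : ZMod (ℓ ^ k)) ^ j ∣ r) =
      ∑ t ∈ range ℓ, ind ((ℓ : ZMod (ℓ ^ k)) ^ (j+1) ∣ r - t * (ℓ : ZMod (ℓ ^ k)) ^ j) := by
  have : NeZero (ℓ ^ k) := ⟨(pow_pos hℓ.pos k).ne'⟩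
  by_cases h : (ℓ : ZMod (ℓ ^ k)) ^ j ∣ r
  · rw [ind_pos h]
    obtain ⟨c, rfl⟩ := h
    obtain ⟨n, rfl⟩ : ∃ n : ℕ, (n : ZMod (ℓ ^ k)) = c := ⟨c.val, by simp⟩
    symm
    have h0 : (ℓ : ZMod (ℓ ^ k)) ^ (j+1) ∣ 
        (ℓ : ZMod (ℓ ^ k)) ^ j * n - (n % ℓ : ℕ) * (ℓ : ZMod (ℓ ^ k)) ^ j := by
      refine ⟨(n / ℓ : ℕ), ?_⟩
      have : (n : ZMod (ℓ ^ k)) = (n % ℓ : ℕ) + ℓ * (n / ℓ : ℕ) := by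
        exact_mod_cast congrArg _ (Nat.mod_add_div n ℓ).symm
      rw [this]; ring
    rw [sum_eq_single (n % ℓ), ind_pos h0]
    · intro t ht hne
      rw [ind_neg]
      intro h1
      apply hne
      rw [mem_range] at ht
      have hlt := Nat.mod_lt n hℓ.pos
      have h2 := dvd_sub h0 h1
      have h3 := dvd_sub h1 h0
      rcases le_total t (n % ℓ) with hle | hle
      · have h4 := uniq hℓ j hj (n % ℓ - t) (by
          rw [Nat.cast_sub hle]
          convert h3 using 1; ring)
        have := Nat.eq_zero_of_dvd_of_lt h4 (by omega)
        omega
      · have h4 := uniq hℓ j hj (t - n % ℓ) (by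
          rw [Nat.cast_sub hle]
          convert h2 using 1; ring)
        have := Nat.eq_zero_of_dvd_of_lt h4 (by omega)
        omega
    · intro h; exact absurd (mem_range.2 (Nat.mod_lt _ hℓ.pos)) h
  · rw [ind_neg h]
    symm
    apply sum_eq_zero
    intro t _
    rw [ind_neg]
    intro h1
    apply h
    have := dvd_add (dvd_trans (pow_dvd_pow _ (Nat.le_succ j)) h1) (dvd_mul_left _ (t : ZMod (ℓ ^ k)))
    simpa using this

lemma transl (hℓ : ℓ.Prime) (j : ℕ) (hj : j < k) {V : Type*} [AddCommGroup V] [Fintype V]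
    (φ : V →+ ZMod (ℓ ^ k)) (w : V) (hw : φ w = (ℓ : ZMod (ℓ ^ k)) ^ j)
    (f : V → ℤ) (hf : ∀ v, f (v + w) = f v) :
    ∑ v, f v * ind ((ℓ : ZMod (ℓ ^ k)) ^ j ∣ φ v) =
      ℓ * ∑ v, f v * ind ((ℓ : ZMod (ℓ ^ k)) ^ (j+1) ∣ φ v) := by
  simp_rw [split hℓ j hj, mul_sum]
  rw [sum_comm]
  have hf' : ∀ t : ℕ, ∀ v, f (v + t • w) = f v := by
    intro t
    induction t with
    | zero => simp
    | succ t ih => intro v; rw [succ_nsmul, ← add_assoc, hf, ih]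
  have : ∀ t ∈ range ℓ, (∑ v, f v * ind ((ℓ : ZMod (ℓ ^ k)) ^ (j+1) ∣ φ v - t * (ℓ : ZMod (ℓ ^ k)) ^ j)) = ∑ v, f v * ind ((ℓ : ZMod (ℓ ^ k)) ^ (j+1) ∣ φ v) := by
    intro t _
    rw [← Equiv.sum_comp (Equiv.addRight (t • w))]
    apply sum_congr rfl
    intro v _
    simp [hf', hw]
  rw [sum_congr rfl this]
  simp [mul_sum]

lemma count_dvd (hℓ : ℓ.Prime) [NeZero (ℓ ^ k)] (j : ℕ) (hj : j ≤ k) :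
    ∑ v : ZMod (ℓ ^ k), ind ((ℓ : ZMod (ℓ ^ k)) ^ j ∣ v) = ℓ ^ (k - j) := by
  induction j with
  | zero => simp [ind]
  | succ j ih =>
    have h1 := transl hℓ j (by omega) (AddMonoidHom.id (ZMod (ℓ ^ k))) ((ℓ : ZMod (ℓ ^ k)) ^ j) rfl
      (fun _ => 1) (by simp)
    simp only [one_mul, AddMonoidHom.id_apply] at h1
    rw [ih (by omega), show k - j = (k - (j+1)) + 1 by omega, pow_succ'] at h1
    exact (mul_left_cancel₀ (by exact_mod_cast hℓ.ne_zero) h1).symm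

end ring

section field
variable {F : Type*} [Field F] [Fintype F] [DecidableEq F]

lemma hcount (m : F) : ∑ e : F, ∑ f : F, (if e * f = m then (1:ℤ) else 0) =
    (Fintype.card F - 1) + Fintype.card F * (if m = 0 then 1 else 0) := by
  rw [← Finset.add_sum_erase _ _ (mem_univ (0:F))]
  have : ∀ e ∈ univ.erase (0:F), ∑ f : F, (if e * f = m then (1:ℤ) else 0) = 1 := by
    intro e he
    have he : e ≠ 0 := by simpa using he
    have : ∀ f, e * f = m ↔ f = m / e := by
      intro f; rw [eq_div_iff he, mul_comm]
    simp [this]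
  rw [sum_congr rfl this]
  have hc : 1 ≤ Fintype.card F := Fintype.card_pos
  by_cases hm : m = 0
  · simp [hm, card_erase_of_mem, card_univ, Nat.cast_sub hc]; ring
  · simp [hm, Ne.symm hm, card_erase_of_mem, card_univ, Nat.cast_sub hc]

lemma hcount' (m : F) : ∑ e : F, ∑ f : F, (if m + e * f = 0 then (1:ℤ) else 0) =
    (Fintype.card F - 1) + Fintype.card F * (if m = 0 then 1 else 0) := by
  have := hcount (-m)
  simp only [neg_eq_zero] at this
  rw [← this]
  refine sum_congr rfl fun e _ => sum_congr rfl fun f _ => ?_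
  congr 1
  rw [eq_neg_iff_add_eq_zero, add_comm]

lemma total : ∑ e : F, ∑ f : F, ∑ b : F, ∑ c : F, ∑ b' : F, ∑ c' : F, 
    (if e * f + b * c + b' * c' = 0 then (1:ℤ) else 0) =
    (Fintype.card F : ℤ)^5 + Fintype.card F ^3 - Fintype.card F ^2 := by
  simp_rw [hcount', sum_add_distrib, ← mul_sum, hcount']
  simp_rw [sum_add_distrib, ← mul_sum, hcount, sum_const, card_univ, nsmul_eq_mul]
  simp
  ring

lemma bad : ∑ a : F, ∑ e : F, ∑ f : F, ∑ b : F, ∑ c : F, ∑ b' : F, ∑ c' : F, 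
    (if (a + e) * (a + f) + b * c = 0 then (1:ℤ) else 0) * 
      (if a * (a + e + f) = b' * c' then (1:ℤ) else 0) =
    (Fintype.card F : ℤ)^5 + 2 * Fintype.card F ^4 - Fintype.card F ^3 - Fintype.card F ^2 := by
  have key : ∀ u v : F, (if u * v = 0 then (1:ℤ) else 0) = (if u = 0 then 1 else 0) + (if v = 0 then 1 else 0)
      - (if u = 0 then 1 else 0) * (if v = 0 then 1 else 0) := by
    intro u v
    by_cases hu : u = 0 <;> by_cases hv : v = 0 <;> simp [hu, hv]
  have hc3 : ∀ m : F, ∑ e : F, ∑ f : F, (if m = e * f then (1:ℤ) else 0) =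
      (Fintype.card F - 1) + Fintype.card F * (if m = 0 then 1 else 0) := by
    intro m
    rw [← hcount m]
    simp only [eq_comm]
  have two : ∀ (A B C D : ℤ) (x y : F), ∑ f : F, (A + B * (if f = x then 1 else 0)) *
      (C + D * (if f = y then 1 else 0)) =
      Fintype.card F * (A * C) + A * D + B * C + B * D * (if x = y then 1 else 0) := by
    intro A B C D x y
    simp [mul_add, add_mul, sum_add_distrib]
    simp_rw [eq_comm (a := y)]
    ring
  have e1 : ∀ a e : F, (a + e = 0) ↔ (e = -a) := fun a e => by grind
  have e2 : ∀ a e f : F, (a + e + f = 0) ↔ (f = - a - e) := fun a e f => by grind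
  have e3 : ∀ a e : F, (-a = -a - e) ↔ (e = 0) := fun a e => by grind
  have e4 : ∀ a : F, (0 = -a) ↔ (a = 0) := fun a => by grind
  have st : ∀ a e f : F, (∑ b : F, ∑ c : F, ∑ b' : F, ∑ c' : F, 
    (if (a + e) * (a + f) + b * c = 0 then (1:ℤ) else 0) * 
      (if a * (a + e + f) = b' * c' then (1:ℤ) else 0)) = 
      (((Fintype.card F - 1) + Fintype.card F * (if e = -a then 1 else 0)) + 
        (Fintype.card F - Fintype.card F * (if e = -a then 1 else 0)) * (if f = -a then 1 else 0)) *
      (((Fintype.card F - 1) + Fintype.card F * (if a = 0 then 1 else 0)) + 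
        (Fintype.card F - Fintype.card F * (if a = 0 then 1 else 0)) * 
          (if f = -a-e then 1 else 0)) := by
    intro a e f
    simp_rw [← mul_sum, hc3, ← sum_mul, hcount', key, e2, e1]
    ring
  simp_rw [st, two, e3]
  simp [mul_add, add_mul, mul_sub, sub_mul, sum_add_distrib, e4]
  ring

lemma base_field : ∑ a : F, ∑ x : F × F × F, ∑ y : F × F × F,
    (if a * (a + x.1 + y.1) - x.2.2 * y.2.2 ≠ 0 then (1:ℤ) else 0) *
      (if x.1 * y.1 + x.2.1 * y.2.1 + x.2.2 * y.2.2 = 0 then 1 else 0) =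
    (Fintype.card F : ℤ)^6 - Fintype.card F ^5 - Fintype.card F ^4 + Fintype.card F ^2 := by
  have h1 : ∀ (a : F) (x y : F × F × F),
     (if a * (a + x.1 + y.1) - x.2.2 * y.2.2 ≠ 0 then (1:ℤ) else 0) *
      (if x.1 * y.1 + x.2.1 * y.2.1 + x.2.2 * y.2.2 = 0 then 1 else 0) =
      (if x.1 * y.1 + x.2.1 * y.2.1 + x.2.2 * y.2.2 = 0 then 1 else 0) -
      (if (a + x.1) * (a + y.1) + x.2.1 * y.2.1 = 0 then (1:ℤ) else 0) * 
      (if a * (a + x.1 + y.1) = x.2.2 * y.2.2 then (1:ℤ) else 0) := by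
    intro a x y
    rw [ite_not]; simp_rw [sub_eq_zero]
    by_cases h : a * (a + x.1 + y.1) = x.2.2 * y.2.2
    · have : (a + x.1) * (a + y.1) + x.2.1 * y.2.1 = 
        x.1 * y.1 + x.2.1 * y.2.1 + x.2.2 * y.2.2 := by linear_combination h
      rw [this]; simp [h]
    · simp [h]
  simp_rw [h1, sum_sub_distrib]
  have hb := bad (F := F)
  have ht := total (F := F)
  have sw : ∀ g : F → F → F → F → F → F → ℤ, 
      ∑ x : F × F × F, ∑ y : F × F × F, g x.1 y.1 x.2.1 y.2.1 x.2.2 y.2.2 = 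
      ∑ e : F, ∑ f : F, ∑ b : F, ∑ c : F, ∑ b' : F, ∑ c' : F, g e f b c b' c' := by
    intro g
    simp_rw [Fintype.sum_prod_type]
    refine sum_congr rfl fun e _ => ?_
    have : ∀ b : F, ∑ b' : F, ∑ f : F, ∑ c : F, ∑ c' : F, g e f b c b' c' = 
        ∑ f : F, ∑ c : F, ∑ b' : F, ∑ c' : F, g e f b c b' c' := by
      intro b
      rw [sum_comm]
      exact sum_congr rfl fun f _ => sum_comm
    simp_rw [this]
    exact sum_comm
  have sw1 := sw (fun e f b c b' c' => if e * f + b * c + b' * c' = 0 then (1:ℤ) else 0)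
  have sw2 := fun a => sw (fun e f b c b' c' => (if (a + e) * (a + f) + b * c = 0 then (1:ℤ) else 0) * 
      (if a * (a + e + f) = b' * c' then (1:ℤ) else 0))
  rw [sw1, ht]
  simp_rw [sw2]
  rw [hb]
  simp
  ring
end field

section main
variable {ℓ k : ℕ}

open Classical in
lemma fiber (hℓ : ℓ.Prime) (hk : 1 ≤ k) [NeZero (ℓ ^ k)] [NeZero ℓ] (g : ZMod ℓ → ℤ) :
    ∑ r : ZMod (ℓ ^ k), g (ZMod.castHom (dvd_pow_self ℓ (by omega : k ≠ 0)) (ZMod ℓ) r) =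
      ℓ ^ (k - 1) * ∑ s, g s := by
  set ρ := ZMod.castHom (dvd_pow_self ℓ (by omega : k ≠ 0)) (ZMod ℓ) with hρ
  have hs : Function.Surjective ρ := ZMod.castHom_surjective _
  have hker : ∀ r, ρ r = 0 ↔ (ℓ : ZMod (ℓ ^ k)) ^ 1 ∣ r := by
    intro r
    rw [pow_one]
    constructor
    · intro h
      by_contra hc
      rw [← unit_iff hℓ hk] at hc
      have : Fact ℓ.Prime := ⟨hℓ⟩
      exact (hc.map ρ).ne_zero h
    · rintro ⟨c, rfl⟩
      simp
  rw [← Finset.sum_fiberwise univ ρ, mul_sum]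
  refine sum_congr rfl fun s _ => ?_
  rw [sum_congr rfl (g := fun _ => g s) (by intro r hr; simp at hr; rw [hr])]
  rw [sum_const, nsmul_eq_mul]
  congr 1
  obtain ⟨r0, rfl⟩ := hs s
  rw [← count_dvd hℓ 1 hk, ← Equiv.sum_comp (Equiv.subRight r0), card_filter]
  push_cast
  refine sum_congr rfl fun r _ => ?_
  rw [← hker, ind_eq]
  simp [sub_eq_zero]

/-- The bilinear form. -/
def dot {R : Type*} [CommRing R] (x y : R × R × R) : R :=
  x.1 * y.1 + x.2.1 * y.2.1 + x.2.2 * y.2.2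

/-- The determinant. -/
def dt {R : Type*} [CommRing R] (a : R) (x y : R × R × R) : R :=
  a * (a + x.1 + y.1) - x.2.2 * y.2.2

/-- The count at level `j`. -/
noncomputable def T (ℓ k j : ℕ) [NeZero (ℓ ^ k)] : ℤ :=
  ∑ a : ZMod (ℓ ^ k), ∑ x : ZMod (ℓ ^ k) × ZMod (ℓ ^ k) × ZMod (ℓ ^ k),
    ∑ y : ZMod (ℓ ^ k) × ZMod (ℓ ^ k) × ZMod (ℓ ^ k), 
    ind (IsUnit (dt a x y)) *
      ind ((ℓ : ZMod (ℓ ^ k)) ^ j ∣ dot x y)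

lemma T_one (hℓ : ℓ.Prime) (hk : 1 ≤ k) [NeZero (ℓ ^ k)] :
    T ℓ k 1 = ℓ ^ (7 * (k - 1)) * ((ℓ:ℤ) ^ 6 - ℓ ^ 5 - ℓ ^ 4 + ℓ ^ 2) := by
  classical
  have : Fact ℓ.Prime := ⟨hℓ⟩
  have : NeZero ℓ := ⟨hℓ.ne_zero⟩
  set ρ := ZMod.castHom (dvd_pow_self ℓ (by omega : k ≠ 0)) (ZMod ℓ) with hρ
  have hker : ∀ r, (ℓ : ZMod (ℓ ^ k)) ∣ r ↔ ρ r = 0 := by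
    intro r
    constructor
    · rintro ⟨c, rfl⟩
      simp
    · intro h
      by_contra hc
      rw [← unit_iff hℓ hk] at hc
      exact (hc.map ρ).ne_zero h
  have hf : ∀ g : ZMod ℓ → ℤ, ∑ r, g (ρ r) = ℓ ^ (k - 1) * ∑ s, g s := fiber (k := k) hℓ hk
  have hb := base_field (F := ZMod ℓ)
  rw [ZMod.card] at hb
  rw [← hb]
  unfold T
  simp_rw [unit_iff hℓ hk, pow_one, hker, dot, dt, Fintype.sum_prod_type]
  simp only [map_add, map_sub, map_mul]
  clear_value ρ
  have hf7 : ∀ g : ZMod ℓ → ZMod ℓ → ZMod ℓ → ZMod ℓ → ZMod ℓ → ZMod ℓ → ZMod ℓ → ℤ,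
    ∑ a, ∑ e, ∑ b, ∑ b', ∑ f, ∑ c, ∑ c', g (ρ a) (ρ e) (ρ b) (ρ b') (ρ f) (ρ c) (ρ c') =
     ℓ ^ (7 * (k - 1)) * ∑ a, ∑ e, ∑ b, ∑ b', ∑ f, ∑ c, ∑ c', g a e b b' f c c' := by
    intro g
    rw [hf (fun a => ∑ e, ∑ b, ∑ b', ∑ f, ∑ c, ∑ c', g a (ρ e) (ρ b) (ρ b') (ρ f) (ρ c) (ρ c'))]
    simp_rw [fun a => hf (fun e => ∑ b, ∑ b', ∑ f, ∑ c, ∑ c', g a e (ρ b) (ρ b') (ρ f) (ρ c) (ρ c')),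
      fun a e => hf (fun b => ∑ b', ∑ f, ∑ c, ∑ c', g a e b (ρ b') (ρ f) (ρ c) (ρ c')),
      fun a e b => hf (fun b' => ∑ f, ∑ c, ∑ c', g a e b b' (ρ f) (ρ c) (ρ c')),
      fun a e b b' => hf (fun f => ∑ c, ∑ c', g a e b b' f (ρ c) (ρ c')),
      fun a e b b' f => hf (fun c => ∑ c', g a e b b' f c (ρ c')),
      fun a e b b' f c => hf (fun c' => g a e b b' f c c'), ← mul_sum]
    ring
  have h8 := hf7 (fun a e b b' f c c' => 
    ind (¬ (a * (a + e + f) - b' * c' = 0)) * ind (e * f + b * c + b' * c' = 0))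
  refine h8.trans ?_
  simp_rw [ind_eq]

/-- All coordinates divisible. -/
def dv {R : Type*} [CommRing R] (p : R) (x : R × R × R) : Prop := p ∣ x.1 ∧ p ∣ x.2.1 ∧ p ∣ x.2.2

/-- The form as an additive map in the second variable. -/
def dotHom {R : Type*} [CommRing R] (x : R × R × R) : (R × R × R) →+ R where
  toFun := dot x
  map_zero' := by simp [dot]
  map_add' y z := by simp [dot]; ring

lemma dot_comm {R : Type*} [CommRing R] (x y : R × R × R) : dot x y = dot y x := by
  simp [dot]; ring

lemma ind_and (P Q : Prop) : ind (P ∧ Q) = ind P * ind Q := by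
  by_cases h : P <;> by_cases h' : Q <;> simp [ind, h, h']

lemma ind_congr {P Q : Prop} (h : P ↔ Q) : ind P = ind Q := by rw [propext h]

lemma count_dv (hℓ : ℓ.Prime) [NeZero (ℓ ^ k)] (j : ℕ) (hj : j ≤ k) :
    ∑ x, ind (dv ((ℓ : ZMod (ℓ ^ k)) ^ j) x) = ℓ ^ (3 * (k - j)) := by
  simp_rw [dv, ind_and, Fintype.sum_prod_type, ← mul_sum, ← sum_mul, count_dvd hℓ j hj]
  ring

lemma ex_dot (hℓ : ℓ.Prime) (hk : 1 ≤ k) (x : ZMod (ℓ ^ k) × ZMod (ℓ ^ k) × ZMod (ℓ ^ k)) (j : ℕ)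
    (h : ¬ dv ((ℓ : ZMod (ℓ ^ k)) ^ j) x) :
    ∃ w, dv (ℓ : ZMod (ℓ ^ k)) w ∧ dotHom x w = (ℓ : ZMod (ℓ ^ k)) ^ j := by
  by_cases h1 : (ℓ : ZMod (ℓ ^ k)) ^ j ∣ x.1
  · by_cases h2 : (ℓ : ZMod (ℓ ^ k)) ^ j ∣ x.2.1
    · have h3 : ¬ (ℓ : ZMod (ℓ ^ k)) ^ j ∣ x.2.2 := fun h3 => h ⟨h1, h2, h3⟩
      obtain ⟨s, hs, he⟩ := ex_mul hℓ hk _ _ h3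
      exact ⟨(0, 0, s), ⟨dvd_zero _, dvd_zero _, hs⟩, by simp [dotHom, dot, he]⟩
    · obtain ⟨s, hs, he⟩ := ex_mul hℓ hk _ _ h2
      exact ⟨(0, s, 0), ⟨dvd_zero _, hs, dvd_zero _⟩, by simp [dotHom, dot, he]⟩
  · obtain ⟨s, hs, he⟩ := ex_mul hℓ hk _ _ h1
    exact ⟨(s, 0, 0), ⟨hs, dvd_zero _, dvd_zero _⟩, by simp [dotHom, dot, he]⟩

lemma ex_dot' (hℓ : ℓ.Prime) (hk : 1 ≤ k) (x : ZMod (ℓ ^ k) × ZMod (ℓ ^ k) × ZMod (ℓ ^ k)) (j : ℕ)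
    (h : ¬ dv (ℓ : ZMod (ℓ ^ k)) x) :
    ∃ w, dv ((ℓ : ZMod (ℓ ^ k)) ^ j) w ∧ dotHom x w = (ℓ : ZMod (ℓ ^ k)) ^ j := by
  have key : ∀ r : ZMod (ℓ ^ k), ¬ (ℓ : ZMod (ℓ ^ k)) ∣ r → 
      ∃ s, (ℓ : ZMod (ℓ ^ k)) ^ j ∣ s ∧ r * s = (ℓ : ZMod (ℓ ^ k)) ^ j := by
    intro r hr
    rw [← unit_iff hℓ hk] at hr
    obtain ⟨u, rfl⟩ := hr
    exact ⟨ℓ ^ j * (↑u⁻¹ : ZMod (ℓ ^ k)), dvd_mul_right _ _, by rw [mul_left_comm]; simp⟩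
  by_cases h1 : (ℓ : ZMod (ℓ ^ k)) ∣ x.1
  · by_cases h2 : (ℓ : ZMod (ℓ ^ k)) ∣ x.2.1
    · have h3 : ¬ (ℓ : ZMod (ℓ ^ k)) ∣ x.2.2 := fun h3 => h ⟨h1, h2, h3⟩
      obtain ⟨s, hs, he⟩ := key _ h3
      exact ⟨(0, 0, s), ⟨dvd_zero _, dvd_zero _, hs⟩, by simp [dotHom, dot, he]⟩
    · obtain ⟨s, hs, he⟩ := key _ h2
      exact ⟨(0, s, 0), ⟨dvd_zero _, hs, dvd_zero _⟩, by simp [dotHom, dot, he]⟩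
  · obtain ⟨s, hs, he⟩ := key _ h1
    exact ⟨(s, 0, 0), ⟨hs, dvd_zero _, dvd_zero _⟩, by simp [dotHom, dot, he]⟩

lemma unit_congr (hℓ : ℓ.Prime) (hk : 1 ≤ k) (r s : ZMod (ℓ ^ k))
    (h : (ℓ : ZMod (ℓ ^ k)) ∣ r - s) : IsUnit r ↔ IsUnit s := by
  rw [unit_iff hℓ hk, unit_iff hℓ hk, not_iff_not]
  exact (dvd_iff_dvd_of_dvd_sub h)

lemma count_unit (hℓ : ℓ.Prime) (hk : 1 ≤ k) [NeZero (ℓ ^ k)] :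
    ∑ a : ZMod (ℓ ^ k), ind (IsUnit a) = (ℓ - 1) * ℓ ^ (k - 1) := by
  have h : ∀ a : ZMod (ℓ ^ k), ind (IsUnit a) = 1 - ind ((ℓ : ZMod (ℓ ^ k)) ^ 1 ∣ a) := by
    intro a
    rw [unit_iff hℓ hk, pow_one]
    by_cases h : (ℓ : ZMod (ℓ ^ k)) ∣ a <;> simp [ind, h]
  simp_rw [h, sum_sub_distrib, count_dvd hℓ 1 hk]
  obtain ⟨m, rfl⟩ : ∃ m, k = m + 1 := ⟨k - 1, by omega⟩
  simp
  ring

lemma step (hℓ : ℓ.Prime) [NeZero (ℓ ^ k)] (j : ℕ) (hj : 1 ≤ j) (hjk : j < k) :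
    ℓ * T ℓ k (j + 1) = T ℓ k j + (ℓ - 1) ^ 2 * ℓ ^ (k - 1) * ℓ ^ (3 * (k - 1)) * ℓ ^ (3 * (k - j)) := by
  have hk : 1 ≤ k := by omega
  set p := (ℓ : ZMod (ℓ ^ k)) with hp
  have hpj : p ∣ p ^ j := dvd_pow_self _ (by omega)
  -- the part of x not divisible
  have A1 : ∀ a x, ∑ y, ind (IsUnit (dt a x y)) * (ℓ * ind (p ^ (j+1) ∣ dot x y) - ind (p ^ j ∣ dot x y)) =
      ind (dv (p ^ j) x) * ∑ y : ZMod (ℓ ^ k) × ZMod (ℓ ^ k) × ZMod (ℓ ^ k), 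
      ind (IsUnit (a * (a + y.1))) * (ℓ * ind (p ^ (j+1) ∣ dot x y) - ind (p ^ j ∣ dot x y)) := by
    intro a x
    by_cases hx : dv (p ^ j) x
    · rw [ind_pos hx, one_mul]
      refine sum_congr rfl fun y _ => ?_
      congr 1
      apply ind_congr
      apply unit_congr hℓ hk
      have : dt a x y - a * (a + y.1) = x.1 * a - x.2.2 * y.2.2 := by unfold dt; ring
      rw [this]
      exact dvd_sub ((hpj.trans hx.1).mul_right _) ((hpj.trans hx.2.2).mul_right _)
    · rw [ind_neg hx, zero_mul]
      obtain ⟨w, hw, hw2⟩ := ex_dot hℓ hk x j hx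
      have := transl hℓ j hjk (dotHom x) w hw2 (fun y => ind (IsUnit (dt a x y))) (by
        intro y
        apply ind_congr
        apply unit_congr hℓ hk
        have : dt a x (y + w) - dt a x y = w.1 * a - w.2.2 * x.2.2 := by
          simp [dt]; ring
        rw [this]
        exact dvd_sub (hw.1.mul_right _) (hw.2.2.mul_right _))
      simp_rw [mul_sub, sum_sub_distrib]
      rw [sub_eq_zero]
      refine Eq.trans ?_ this.symm
      rw [mul_sum]
      refine sum_congr rfl fun y _ => ?_
      rw [mul_left_comm]; rfl
  have A2 : ∀ y, ∑ x, ind (dv (p ^ j) x) * (ℓ * ind (p ^ (j+1) ∣ dot x y) - ind (p ^ j ∣ dot x y)) = 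
      ind (dv p y) * ((ℓ - 1) * ∑ x, ind (dv (p ^ j) x)) := by
    intro y
    by_cases hy : dv p y
    · rw [ind_pos hy, one_mul, mul_sum]
      refine sum_congr rfl fun x _ => ?_
      by_cases hx : dv (p ^ j) x
      · have h1 : p ^ (j+1) ∣ dot x y := by
          rw [pow_succ]
          exact dvd_add (dvd_add (mul_dvd_mul hx.1 hy.1) (mul_dvd_mul hx.2.1 hy.2.1)) 
            (mul_dvd_mul hx.2.2 hy.2.2)
        rw [ind_pos hx, ind_pos h1, ind_pos ((pow_dvd_pow _ (Nat.le_succ j)).trans h1)]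
        ring
      · rw [ind_neg hx]; ring
    · rw [ind_neg hy, zero_mul]
      obtain ⟨w, hw, hw2⟩ := ex_dot' hℓ hk y j hy
      have := transl hℓ j hjk (dotHom y) w hw2 (fun x => ind (dv (p ^ j) x)) (by
        intro x
        apply ind_congr
        simp only [dv, Prod.fst_add, Prod.snd_add]
        rw [dvd_add_left hw.1, dvd_add_left hw.2.1, dvd_add_left hw.2.2])
      simp_rw [mul_sub, sum_sub_distrib]
      rw [sub_eq_zero]
      simp_rw [dot_comm _ y]
      refine Eq.trans ?_ this.symm
      rw [mul_sum]
      refine sum_congr rfl fun y _ => ?_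
      rw [mul_left_comm]; rfl
  have A3 : ∀ (a : ZMod (ℓ ^ k)) (y : ZMod (ℓ ^ k) × ZMod (ℓ ^ k) × ZMod (ℓ ^ k)), 
      ind (IsUnit (a * (a + y.1))) * ind (dv p y) = ind (IsUnit a) * ind (dv p y) := by
    intro a y
    by_cases hy : dv p y
    · congr 1
      apply ind_congr
      rw [IsUnit.mul_iff]
      rw [unit_congr hℓ hk (a + y.1) a (by simpa using hy.1)]
      simp
    · rw [ind_neg hy]; ring
  have A4 : ℓ * T ℓ k (j + 1) - T ℓ k j = 
      ∑ a, ∑ x, ∑ y, ind (IsUnit (dt a x y)) * (ℓ * ind (p ^ (j+1) ∣ dot x y) - ind (p ^ j ∣ dot x y)) := by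
    unfold T
    simp_rw [mul_sum, mul_sub, sum_sub_distrib]
    congr 1
    refine sum_congr rfl fun a _ => sum_congr rfl fun x _ => sum_congr rfl fun y _ => ?_
    ring
  have A5 : ∀ a, ∑ x, ∑ y, ind (IsUnit (dt a x y)) * (ℓ * ind (p ^ (j+1) ∣ dot x y) - ind (p ^ j ∣ dot x y))
     = ind (IsUnit a) * ((∑ y, ind (dv p y)) * ((ℓ - 1) * ∑ x, ind (dv (p ^ j) x))) := by
    intro a
    simp_rw [A1]
    have : ∀ x, ind (dv (p ^ j) x) * ∑ y : ZMod (ℓ ^ k) × ZMod (ℓ ^ k) × ZMod (ℓ ^ k), 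
      ind (IsUnit (a * (a + y.1))) * (ℓ * ind (p ^ (j+1) ∣ dot x y) - ind (p ^ j ∣ dot x y)) = 
      ∑ y : ZMod (ℓ ^ k) × ZMod (ℓ ^ k) × ZMod (ℓ ^ k), 
      ind (IsUnit (a * (a + y.1))) * (ind (dv (p ^ j) x) * (ℓ * ind (p ^ (j+1) ∣ dot x y) - ind (p ^ j ∣ dot x y))) := by
      intro x
      rw [mul_sum]
      exact sum_congr rfl fun y _ => by ring
    simp_rw [this]
    rw [sum_comm]
    simp_rw [← mul_sum, A2, ← mul_assoc, A3, ← sum_mul, ← mul_sum]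
  have c1 := count_dv (k := k) hℓ 1 hk
  have c2 := count_dv (k := k) hℓ j hjk.le
  rw [pow_one] at c1
  simp_rw [A5, ← sum_mul, count_unit hℓ hk] at A4
  rw [hp, c1, c2] at A4
  linear_combination A4

lemma T_all (hℓ : ℓ.Prime) [NeZero (ℓ ^ k)] (j : ℕ) (hjk : j + 1 ≤ k) :
    (ℓ + 1) * (ℓ ^ (7 * (j + 1)) * T ℓ k (j + 1)) = ℓ ^ (7 * k) * 
      ((ℓ - 1) * ℓ ^ (6 * j + 2) * (ℓ ^ 4 + ℓ ^ 3 - ℓ ^ 2 - 2 * ℓ) - (ℓ - 1) * ℓ ^ (4 * j + 2)) := by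
  induction j with
  | zero => 
    rw [zero_add, T_one hℓ hjk]
    obtain ⟨m, rfl⟩ : ∃ m, k = m + 1 := ⟨k - 1, by omega⟩
    simp only [Nat.add_sub_cancel]
    ring
  | succ j ih => 
    have h := step hℓ (j+1) (by omega) (by omega : j + 1 < k)
    have ih := ih (by omega)
    obtain ⟨m, rfl⟩ : ∃ m, k = j + 2 + m := ⟨k - (j + 2), by omega⟩
    simp only [show j + 2 + m - 1 = j + 1 + m by omega, show j + 2 + m - (j + 1) = m + 1 by omega] at h
    linear_combination ((ℓ:ℤ) ^ 6 * ih + (ℓ+1) * ℓ ^ (7 * (j+1) + 6) * h)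

lemma charpoly_iff {R : Type*} [CommRing R] [Nontrivial R] (M N : Matrix (Fin 2) (Fin 2) R) :
    M.charpoly = N.charpoly ↔ M.trace = N.trace ∧ M.det = N.det := by
  constructor
  · intro h
    refine ⟨?_, ?_⟩
    · rw [Matrix.trace_eq_neg_charpoly_coeff, Matrix.trace_eq_neg_charpoly_coeff, h]
    · rw [Matrix.det_eq_sign_charpoly_coeff, Matrix.det_eq_sign_charpoly_coeff, h]
  · rintro ⟨h1, h2⟩
    rw [Matrix.charpoly_fin_two, Matrix.charpoly_fin_two, h1, h2]

/-- Parametrisation of the pairs. -/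
noncomputable def par {R : Type*} [CommRing R] [Nontrivial R] :
    {p : GL (Fin 2) R × GL (Fin 2) R | Matrix.charpoly (p.1 : Matrix (Fin 2) (Fin 2) R) =
          Matrix.charpoly (p.2 : Matrix (Fin 2) (Fin 2) R)} ≃
    {q : R × (R × R × R) × (R × R × R) // IsUnit (dt q.1 q.2.1 q.2.2) ∧ dot q.2.1 q.2.2 = 0} :=
  Equiv.ofBijective (fun p => ⟨(p.1.2 0 0, (p.1.1 0 0 - p.1.2 0 0, p.1.1 0 1, p.1.2 0 1),
      (p.1.1 1 1 - p.1.2 0 0, - p.1.1 1 0, p.1.2 1 0)), by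
    obtain ⟨⟨M, N⟩, h⟩ := p
    have h' := (charpoly_iff _ _).1 h
    simp only [Matrix.trace_fin_two, Matrix.det_fin_two] at h'
    have hN := (Matrix.isUnit_iff_isUnit_det _).1 N.isUnit
    rw [Matrix.det_fin_two] at hN
    constructor
    · convert hN using 1
      simp only [dt]
      linear_combination (N 0 0) * h'.1
    · simp only [dot]
      linear_combination h'.2 - (N 0 0) * h'.1⟩) (by
    constructor
    · rintro ⟨⟨M, N⟩, h⟩ ⟨⟨M', N'⟩, g⟩ he
      have h' := ((charpoly_iff _ _).1 h).1
      have g' := ((charpoly_iff _ _).1 g).1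
      simp only [Matrix.trace_fin_two] at h' g'
      simp only [Subtype.mk.injEq, Prod.mk.injEq] at he
      obtain ⟨e1, ⟨e2, e3, e4⟩, e5, e6, e7⟩ := he
      have f1 : M 0 0 = M' 0 0 := by linear_combination e1 + e2
      have f2 : M 1 1 = M' 1 1 := by linear_combination e1 + e5
      have f3 : M 1 0 = M' 1 0 := by linear_combination -e6
      have f4 : N 1 1 = N' 1 1 := by linear_combination g' - h' + f1 + f2 - e1
      have hM : M = M' := by
        ext i j; fin_cases i <;> fin_cases j <;> assumption
      have hN : N = N' := by
        ext i j; fin_cases i <;> fin_cases j <;> assumption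
      subst hM hN; rfl
    · rintro ⟨⟨a, ⟨e, b, b'⟩, ⟨f, c, c'⟩⟩, hu, h0⟩
      simp only [dt, dot] at hu h0
      have u2 : IsUnit (!![a, b'; c', a + e + f]).det := by
        rw [Matrix.det_fin_two_of]; exact hu
      have u1 : IsUnit (!![a + e, b; -c, a + f]).det := by
        rw [Matrix.det_fin_two_of]
        convert hu using 1
        linear_combination h0
      refine ⟨⟨(Matrix.GeneralLinearGroup.mk'' _ u1, Matrix.GeneralLinearGroup.mk'' _ u2), ?_⟩, ?_⟩
      · refine (charpoly_iff _ _).2 ⟨?_, ?_⟩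
        · simp [Matrix.GeneralLinearGroup.mk'', Matrix.nonsingInvUnit, Matrix.trace_fin_two]; ring
        · simp [Matrix.GeneralLinearGroup.mk'', Matrix.nonsingInvUnit, Matrix.det_fin_two]
          linear_combination h0
      · simp [Matrix.GeneralLinearGroup.mk'', Matrix.nonsingInvUnit])

lemma card_eq [NeZero (ℓ ^ k)] [Nontrivial (ZMod (ℓ ^ k))] :
   (Nat.card {p : GL (Fin 2) (ZMod (ℓ ^ k)) × GL (Fin 2) (ZMod (ℓ ^ k)) |
        Matrix.charpoly (p.1 : Matrix (Fin 2) (Fin 2) (ZMod (ℓ ^ k))) =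
          Matrix.charpoly (p.2 : Matrix (Fin 2) (Fin 2) (ZMod (ℓ ^ k)))} : ℤ) = T ℓ k k := by
  classical
  rw [Nat.card_congr par, Nat.card_eq_fintype_card, Fintype.card_subtype, card_filter]
  push_cast
  simp_rw [Fintype.sum_prod_type (f := fun q : ZMod (ℓ ^ k) × (ZMod (ℓ ^ k) × ZMod (ℓ ^ k) × ZMod (ℓ ^ k)) × (ZMod (ℓ ^ k) × ZMod (ℓ ^ k) × ZMod (ℓ ^ k)) => _)]
  unfold T
  refine sum_congr rfl fun a _ => ?_
  rw [Fintype.sum_prod_type]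
  refine sum_congr rfl fun x _ => sum_congr rfl fun y _ => ?_
  rw [← ind_and, ← ind_eq]
  apply ind_congr
  have : (ℓ : ZMod (ℓ ^ k)) ^ k = 0 := by
    rw [← Nat.cast_pow]; exact ZMod.natCast_self _
  rw [this, zero_dvd_iff]

end main
end Aux

/-- For an odd prime `ℓ` and `k ≥ 1`, the set `𝒜ᵗ_{ℓᵏ,S}` of pairs
`(τ, τ') ∈ GL₂(ℤ/ℓᵏℤ)²` with equal characteristic polynomials satisfies
`(ℓ+1) · #𝒜ᵗ_{ℓᵏ,S} = (ℓ−1)·ℓ^(6k−4)·(ℓ⁴ + ℓ³ − ℓ² − 2ℓ) − (ℓ−1)·ℓ^(4k−2)`. -/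
theorem stmt_5 (ℓ k : ℕ) (hℓ : ℓ.Prime) (hodd : ℓ ≠ 2) (hk : 1 ≤ k) :
    (ℓ + 1) *
      Nat.card {p : GL (Fin 2) (ZMod (ℓ ^ k)) × GL (Fin 2) (ZMod (ℓ ^ k)) |
        Matrix.charpoly (p.1 : Matrix (Fin 2) (Fin 2) (ZMod (ℓ ^ k))) =
          Matrix.charpoly (p.2 : Matrix (Fin 2) (Fin 2) (ZMod (ℓ ^ k)))} =
      (ℓ - 1) * ℓ ^ (6 * k - 4) * (ℓ ^ 4 + ℓ ^ 3 - ℓ ^ 2 - 2 * ℓ) -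
        (ℓ - 1) * ℓ ^ (4 * k - 2) := by
  have i1 : NeZero (ℓ ^ k) := ⟨(pow_pos hℓ.pos k).ne'⟩
  have i2 : Fact (1 < ℓ ^ k) := ⟨Nat.one_lt_pow (by omega) hℓ.one_lt⟩
  have h := Aux.card_eq (ℓ := ℓ) (k := k)
  set N := Nat.card {p : GL (Fin 2) (ZMod (ℓ ^ k)) × GL (Fin 2) (ZMod (ℓ ^ k)) |
        Matrix.charpoly (p.1 : Matrix (Fin 2) (Fin 2) (ZMod (ℓ ^ k))) =
          Matrix.charpoly (p.2 : Matrix (Fin 2) (Fin 2) (ZMod (ℓ ^ k)))} with hN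
  clear_value N
  obtain ⟨j, rfl⟩ : ∃ j, k = j + 1 := ⟨k - 1, by omega⟩
  have hT := Aux.T_all (k := j + 1) hℓ j le_rfl
  rw [← h, mul_left_comm] at hT
  have hl0 : (ℓ : ℤ) ≠ 0 := by exact_mod_cast hℓ.ne_zero
  have hT := mul_left_cancel₀ (pow_ne_zero _ hl0) hT
  rw [show 6 * (j + 1) - 4 = 6 * j + 2 by omega, show 4 * (j + 1) - 2 = 4 * j + 2 by omega]
  have hl2 := hℓ.two_le
  obtain ⟨m, hm⟩ : ∃ m, ℓ = m + 2 := ⟨ℓ - 2, by omega⟩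
  have s1 : ((ℓ - 1 : ℕ) : ℤ) = ℓ - 1 := by push_cast [show 1 ≤ ℓ by omega]; ring
  have s2 : ((ℓ ^ 4 + ℓ ^ 3 - ℓ ^ 2 - 2 * ℓ : ℕ) : ℤ) = ℓ ^ 4 + ℓ ^ 3 - ℓ ^ 2 - 2 * ℓ := by
    have : ℓ ^ 4 + ℓ ^ 3 = ℓ ^ 2 + 2 * ℓ + (ℓ ^ 4 + ℓ ^ 3 - ℓ ^ 2 - 2 * ℓ) := by
      have h1 : ℓ ^ 2 ≤ ℓ ^ 4 := Nat.pow_le_pow_right (by omega) (by omega)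
      have h2 : 2 * ℓ ≤ ℓ ^ 3 := by nlinarith [Nat.mul_le_mul hl2 hl2]
      omega
    have := congrArg (Nat.cast : ℕ → ℤ) this
    push_cast at this
    linarith
  apply eq_tsub_of_add_eq
  zify
  rw [s1, s2]
  linarith
end

section
/- Let ℓ be an odd prime and D an integer that is a quadratic nonresidue modulo ℓ. For each k ≥ 1 let R_k = (ℤ/ℓᵏℤ)[X]/(X² − D), let 𝒜_{ℓᵏ,I} = {σ ∈ GL₂(R_k) | det σ lies in the image of (ℤ/ℓᵏℤ)^×} and 𝒜ᵗ_{ℓᵏ,I} = {σ ∈ 𝒜_{ℓᵏ,I} | tr σ lies in the image of ℤ/ℓᵏℤ}. Then the sequence k ↦ ℓᵏ · #𝒜ᵗ_{ℓᵏ,I} / #𝒜_{ℓᵏ,I} (a sequence of real numbers) converges as k → ∞ to ℓ³(ℓ² + ℓ + 1)/((ℓ+1)(ℓ⁴ − 1)). -/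
open Matrix Polynomial Filter

/-- Fibre counting for a homomorphism of finite groups. -/
theorem fib_count {G H : Type} [AddCommGroup G] [AddCommGroup H] [Finite G] [Finite H]
    (f : G →+ H) (P : H → Prop) :
    Nat.card {g : G // P (f g)} * Nat.card {h : H // h ∈ f.range}
      = Nat.card G * Nat.card {h : H // h ∈ f.range ∧ P h} := by
  classical
  have key : ∀ h : H, h ∈ f.range → Nat.card {g : G // f g = h} = Nat.card f.ker := by
    rintro h ⟨g₀, rfl⟩
    refine Nat.card_congr ⟨fun g => ⟨g.1 - g₀, by simp [AddMonoidHom.mem_ker, g.2]⟩,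
      fun g => ⟨g.1 + g₀, by rw [map_add, (AddMonoidHom.mem_ker).1 g.2, zero_add]⟩, fun g => by simp, fun g => by simp⟩
  have gen : ∀ Q : H → Prop, Nat.card {g : G // Q (f g)}
      = Nat.card {h : H // h ∈ f.range ∧ Q h} * Nat.card f.ker := by
    intro Q
    have e : {g : G // Q (f g)} ≃ Σ h : {h : H // h ∈ f.range ∧ Q h}, {g : G // f g = h.1} :=
      ⟨fun g => ⟨⟨f g.1, ⟨g.1, rfl⟩, g.2⟩, ⟨g.1, rfl⟩⟩,
       fun p => ⟨p.2.1, by rw [p.2.2]; exact p.1.2.2⟩, fun g => rfl, by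
        rintro ⟨⟨h, hh⟩, ⟨g, hg⟩⟩; change f g = h at hg; subst hg; rfl⟩
    have := Fintype.ofFinite {h : H // h ∈ f.range ∧ Q h}
    rw [Nat.card_congr e, Nat.card_sigma, Finset.sum_congr rfl (fun h _ => key h.1 h.2.1)]
    rw [Finset.sum_const, Finset.card_univ, smul_eq_mul, ← Nat.card_eq_fintype_card]
  have h1 := gen P
  have h2 := gen (fun _ => True)
  have h3 : Nat.card {g : G // True} = Nat.card G := Nat.card_congr (Equiv.subtypeUnivEquiv (by simp))
  simp only [and_true] at h2
  rw [h3] at h2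
  rw [h1, h2]; ring

theorem fib_count_surj {G H : Type} [AddCommGroup G] [AddCommGroup H] [Finite G] [Finite H]
    (f : G →+ H) (hf : Function.Surjective f) (P : H → Prop) :
    Nat.card {g : G // P (f g)} * Nat.card H = Nat.card G * Nat.card {h : H // P h} := by
  have := fib_count f P
  have h : ∀ x, x ∈ f.range := fun x => hf x
  simp only [h, true_and] at this
  rwa [Nat.card_congr (Equiv.subtypeUnivEquiv (p := fun _ : H => True) (by simp))] at this

theorem card_prod_sum {α β : Type} [Fintype α] [Finite β] (P : α → β → Prop) :
    Nat.card {p : α × β // P p.1 p.2} = ∑ a, Nat.card {b // P a b} := by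
  rw [← Nat.card_sigma]
  exact Nat.card_congr ⟨fun p => ⟨p.1.1, p.1.2, p.2⟩, fun p => ⟨(p.1, p.2.1), p.2.2⟩,
    fun _ => rfl, fun _ => rfl⟩

theorem card_not {α : Type} [Finite α] (P : α → Prop) :
    Nat.card {a // P a} + Nat.card {a // ¬ P a} = Nat.card α := by
  classical
  have := Fintype.ofFinite α
  simp only [Nat.card_eq_fintype_card]
  have := Fintype.card_subtype_compl P
  have h2 := Fintype.card_subtype_le P
  omega

section Z
variable (q k : ℕ) [hq : Fact q.Prime]

/-- reduction mod q -/
def redq : ZMod (q ^ (k+1)) →+* ZMod q := ZMod.castHom (dvd_pow_self q (Nat.succ_ne_zero k)) (ZMod q)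

/-- reduction mod q^k -/
def redk : ZMod (q ^ (k+1)) →+* ZMod (q ^ k) := ZMod.castHom (pow_dvd_pow q (Nat.le_succ k)) _

theorem redq_surj : Function.Surjective (redq q k) := ZMod.castHom_surjective _
theorem redk_surj : Function.Surjective (redk q k) := ZMod.castHom_surjective _

instance neZ : NeZero (q ^ k) := ⟨pow_ne_zero _ hq.out.ne_zero⟩

theorem unit_iff (x : ZMod (q ^ (k+1))) : IsUnit x ↔ redq q k x ≠ 0 := by
  obtain ⟨n, rfl⟩ := ZMod.natCast_zmod_surjective x
  rw [ZMod.isUnit_iff_coprime, Nat.coprime_pow_right_iff (Nat.succ_pos k), map_natCast, Ne,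
    ZMod.natCast_eq_zero_iff, Nat.coprime_comm, hq.out.coprime_iff_not_dvd]

theorem nonunit_iff (x : ZMod (q ^ (k+1))) : ¬ IsUnit x ↔ ∃ y, x = q * y := by
  rw [unit_iff, not_not]
  constructor
  · obtain ⟨n, rfl⟩ := ZMod.natCast_zmod_surjective x
    rw [map_natCast, ZMod.natCast_eq_zero_iff]
    rintro ⟨m, rfl⟩
    exact ⟨m, by push_cast; rfl⟩
  · rintro ⟨y, rfl⟩
    simp

theorem mul_eq_zero_iff_redk (x : ZMod (q ^ (k+1))) : q * x = 0 ↔ redk q k x = 0 := by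
  obtain ⟨n, rfl⟩ := ZMod.natCast_zmod_surjective x
  rw [map_natCast, ZMod.natCast_eq_zero_iff, ← Nat.cast_mul, ZMod.natCast_eq_zero_iff, pow_succ',
    Nat.mul_dvd_mul_iff_left hq.out.pos]

theorem card_redq (P : ZMod q → Prop) :
    Nat.card {x : ZMod (q ^ (k+1)) // P (redq q k x)} = q ^ k * Nat.card {x // P x} := by
  have := fib_count_surj (redq q k).toAddMonoidHom (redq_surj q k) P
  simp only [Nat.card_zmod] at this
  apply Nat.eq_of_mul_eq_mul_right hq.out.pos
  refine this.trans ?_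
  rw [pow_succ]; ring

theorem card_nonunit : Nat.card {x : ZMod (q ^ (k+1)) // ¬ IsUnit x} = q ^ k := by
  simp only [unit_iff, not_not]
  rw [card_redq q k (fun x => x = 0)]
  simp

theorem card_unit : Nat.card {x : ZMod (q ^ (k+1)) // IsUnit x} + q ^ k = q ^ (k+1) := by
  have := card_not (fun x : ZMod (q ^ (k+1)) => IsUnit x)
  rwa [card_nonunit, Nat.card_zmod] at this

/-- number of solutions of the bilinear equation -/
noncomputable def MM (n : ℕ) : ℕ :=
  Nat.card {p : (Fin 3 → ZMod (q ^ n)) × (Fin 3 → ZMod (q ^ n)) // p.1 ⬝ᵥ p.2 = 0}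

theorem card_nonprim {ι : Type} [Fintype ι] :
    Nat.card {x : ι → ZMod (q ^ (k+1)) // ∀ i, ¬ IsUnit (x i)} = q ^ (k * Fintype.card ι) := by
  classical
  rw [Nat.card_congr (Equiv.subtypePiEquivPi (p := fun _ x => ¬ IsUnit x)), Nat.card_pi]
  rw [Finset.prod_congr rfl (fun i _ => card_nonunit q k)]
  simp [pow_mul]

theorem card_dot (x : Fin 3 → ZMod (q ^ (k+1))) (hx : ¬ ∀ i, ¬ IsUnit (x i)) :
    Nat.card {y // x ⬝ᵥ y = 0} = q ^ (2 * (k+1)) := by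
  push Not at hx
  obtain ⟨i, hi⟩ := hx
  let f : (Fin 3 → ZMod (q ^ (k+1))) →+ ZMod (q ^ (k+1)) :=
    ⟨⟨fun y => x ⬝ᵥ y, by simp⟩, fun a b => dotProduct_add x a b⟩
  have hf : Function.Surjective f := by
    intro z
    obtain ⟨u, hu⟩ := hi
    refine ⟨Pi.single i (↑u⁻¹ * z), ?_⟩
    show x ⬝ᵥ _ = z
    rw [dotProduct_single, ← hu]; simp
  have := fib_count_surj f hf (fun z => z = 0)
  rw [Nat.card_pi] at this
  simp only [Nat.card_zmod, Finset.prod_const, Finset.card_univ, Fintype.card_fin] at this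
  apply Nat.eq_of_mul_eq_mul_right (pow_pos hq.out.pos (k+1))
  refine this.trans ?_
  simp
  ring

theorem MM_rec : MM q (k+1) + q ^ (2 * (k+1)) * q ^ (3*k) = q ^ (2 * (k+1)) * q ^ (3 * (k+1)) + q ^ 3 * MM q k := by
  classical
  set Z := ZMod (q ^ (k+1))
  set T := {p : (Fin 3 → Z) × (Fin 3 → Z) // p.1 ⬝ᵥ p.2 = 0} with hT
  have h0 : MM q (k+1) = Nat.card T := rfl
  have h1 := card_not (fun t : T => ∀ i, ¬ IsUnit (t.1.1 i))
  -- primitive part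
  have h2 : Nat.card {t : T // ¬ ∀ i, ¬ IsUnit (t.1.1 i)} =
      Nat.card {x : Fin 3 → Z // ¬ ∀ i, ¬ IsUnit (x i)} * q ^ (2 * (k+1)) := by
    have := card_prod_sum (fun (x : {x : Fin 3 → Z // ¬ ∀ i, ¬ IsUnit (x i)}) (y : Fin 3 → Z) => x.1 ⬝ᵥ y = 0)
    rw [Finset.sum_congr rfl (fun x _ => card_dot q k x.1 x.2)] at this
    simp only [Finset.sum_const, Finset.card_univ, smul_eq_mul, ← Nat.card_eq_fintype_card] at this
    rw [← this]
    exact Nat.card_congr ⟨fun t => ⟨(⟨t.1.1.1, t.2⟩, t.1.1.2), t.1.2⟩,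
      fun p => ⟨⟨(p.1.1.1, p.1.2), p.2⟩, p.1.1.2⟩, fun _ => rfl, fun _ => rfl⟩
  have h3 := card_not (fun x : Fin 3 → Z => ∀ i, ¬ IsUnit (x i))
  rw [card_nonprim, Nat.card_pi] at h3
  simp only [Z, Nat.card_zmod, Finset.prod_const, Finset.card_univ, Fintype.card_fin] at h3
  -- nonprimitive part
  let f : (Fin 3 → Z) × (Fin 3 → Z) →+ (Fin 3 → Z) × (Fin 3 → Z) :=
    AddMonoidHom.prodMap (AddMonoidHom.mulLeft ((q : Fin 3 → Z))) (AddMonoidHom.id _)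
  have hr : ∀ p, p ∈ f.range ↔ ∀ i, ¬ IsUnit (p.1 i) := by
    intro p
    constructor
    · rintro ⟨a, rfl⟩ i
      exact (nonunit_iff q k _).2 ⟨a.1 i, by simp [f]⟩
    · intro h
      choose y hy using fun i => (nonunit_iff q k _).1 (h i)
      refine ⟨(y, p.2), ?_⟩
      ext i
      · simp [f, hy]
      · simp [f]
  have h4 := fib_count f (fun p => p.1 ⬝ᵥ p.2 = 0)
  simp only [hr] at h4
  have h5 : Nat.card {p : (Fin 3 → Z) × (Fin 3 → Z) // ∀ i, ¬ IsUnit (p.1 i)} = q ^ (k*3) * q ^ (3 * (k+1)) := by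
    have e : {p : (Fin 3 → Z) × (Fin 3 → Z) // ∀ i, ¬ IsUnit (p.1 i)} ≃ {x : Fin 3 → Z // ∀ i, ¬ IsUnit (x i)} × (Fin 3 → Z) :=
      ⟨fun p => (⟨p.1.1, p.2⟩, p.1.2), fun p => ⟨(p.1.1, p.2), p.1.2⟩, fun _ => rfl, fun _ => rfl⟩
    rw [Nat.card_congr e, Nat.card_prod, card_nonprim, Nat.card_pi]
    simp only [Z, Nat.card_zmod, Finset.prod_const, Finset.card_univ, Fintype.card_fin]; ring
  have h6 : Nat.card {p : (Fin 3 → Z) × (Fin 3 → Z) // (∀ i, ¬ IsUnit (p.1 i)) ∧ p.1 ⬝ᵥ p.2 = 0}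
      = Nat.card {t : T // ∀ i, ¬ IsUnit (t.1.1 i)} :=
    Nat.card_congr ⟨fun p => ⟨⟨p.1, p.2.2⟩, p.2.1⟩, fun t => ⟨t.1.1, t.2, t.1.2⟩, fun _ => rfl, fun _ => rfl⟩
  -- reduction
  let φ : (Fin 3 → Z) →+ (Fin 3 → ZMod (q ^ k)) := (redk q k).toAddMonoidHom.compLeft (Fin 3)
  have hφ : Function.Surjective φ := fun y => by
    choose x hx using fun i => redk_surj q k (y i)
    exact ⟨x, funext hx⟩
  have h7 := fib_count_surj (AddMonoidHom.prodMap φ φ) (hφ.prodMap hφ) (fun p => p.1 ⬝ᵥ p.2 = 0)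
  have h8 : ∀ p : (Fin 3 → Z) × (Fin 3 → Z), ((f p).1 ⬝ᵥ (f p).2 = 0) ↔
     ((AddMonoidHom.prodMap φ φ p).1 ⬝ᵥ (AddMonoidHom.prodMap φ φ p).2 = 0) := by
    intro p
    have e1 : (f p).1 ⬝ᵥ (f p).2 = (q : Z) * (p.1 ⬝ᵥ p.2) := by
      simp only [f, dotProduct]
      refine Eq.trans ?_ (Finset.mul_sum _ _ _).symm
      simp [mul_assoc]
    have e2 : (AddMonoidHom.prodMap φ φ p).1 ⬝ᵥ (AddMonoidHom.prodMap φ φ p).2 = redk q k (p.1 ⬝ᵥ p.2) := by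
      simp [φ, dotProduct]
    rw [e1, e2, mul_eq_zero_iff_redk]
  simp only [h8] at h4
  rw [h5, h6] at h4
  change _ = _ * MM q k at h7
  simp only [Nat.card_prod, Nat.card_pi, Z, Nat.card_zmod, Finset.prod_const, Finset.card_univ, Fintype.card_fin] at h4 h7
  have hqp := hq.out.pos
  have h9 : Nat.card {t : T // ∀ i, ¬ IsUnit (t.1.1 i)} = q ^ 3 * MM q k := by
    set A := Nat.card {t : T // ∀ i, ¬ IsUnit (t.1.1 i)}
    set B := Nat.card {g : (Fin 3 → Z) × (Fin 3 → Z) //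
        ((AddMonoidHom.prodMap φ φ) g).1 ⬝ᵥ ((AddMonoidHom.prodMap φ φ) g).2 = 0}
    have hp : 0 < (q^k) := by positivity
    have h7' : B = q ^ 6 * MM q k := by
      apply Nat.eq_of_mul_eq_mul_right (pow_pos hp 6)
      calc B * (q^k)^6 = B * ((q ^ k) ^ 3 * (q ^ k) ^ 3) := by ring
        _ = _ := h7
        _ = _ := by ring
    rw [h7'] at h4
    apply Nat.eq_of_mul_eq_mul_left (show 0 < (q ^ (k + 1)) ^ 3 * (q ^ (k + 1)) ^ 3 by positivity)
    rw [← h4]; ring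
  rw [h0, ← h1, h9, h2]
  have h10 : q ^ (2*(k+1)) * q^(3*(k+1)) = q ^ (2*(k+1)) * (q ^ (k+1))^3 := by ring
  rw [h10, ← h3]; ring

end Z

/-- Abstract quadratic extension data of the ring `ℤ/q^(k+1)`. -/
structure QD (q k : ℕ) [Fact q.Prime] (S : Type) [CommRing S] [Algebra (ZMod (q ^ (k+1))) S] where
  D : ZMod (q ^ (k+1))
  r : S
  hr : r * r = algebraMap _ S D
  hb : Function.Bijective (fun p : ZMod (q ^ (k+1)) × ZMod (q ^ (k+1)) =>
    algebraMap _ S p.1 + algebraMap _ S p.2 * r)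
  hD : ¬ IsSquare (redq q k D)

theorem card_and {α β : Type} (P : α → Prop) (Q : β → Prop) :
    Nat.card {p : α × β // P p.1 ∧ Q p.2} = Nat.card {a // P a} * Nat.card {b // Q b} := by
  rw [← Nat.card_prod]
  exact Nat.card_congr ⟨fun p => (⟨p.1.1, p.2.1⟩, ⟨p.1.2, p.2.2⟩),
    fun p => ⟨(p.1.1, p.2.1), p.1.2, p.2.2⟩, fun _ => rfl, fun _ => rfl⟩

namespace QD
variable {q k : ℕ} [hq : Fact q.Prime] {S : Type} [CommRing S] [Algebra (ZMod (q ^ (k+1))) S]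

local notation "Zk" => ZMod (q ^ (k+1))
local notation "am" => algebraMap (ZMod (q ^ (k+1))) S

/-- coordinates -/
noncomputable def E (d : QD q k S) : Zk × Zk ≃ S := Equiv.ofBijective _ d.hb

theorem E_apply (d : QD q k S) (p : Zk × Zk) : d.E p = am p.1 + am p.2 * d.r := rfl

theorem fin (d : QD q k S) : Finite S := Finite.of_equiv _ d.E

theorem card_S (d : QD q k S) : Nat.card S = q ^ (k+1) * q ^ (k+1) := by
  rw [← Nat.card_congr d.E, Nat.card_prod, Nat.card_zmod]

theorem inj (d : QD q k S) : Function.Injective am := by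
  intro x y h
  have : d.E (x, 0) = d.E (y, 0) := by simp [E_apply, h]
  have := d.E.injective this
  simpa using this

theorem range_iff (d : QD q k S) (x y : Zk) : (∃ w, am x + am y * d.r = am w) ↔ y = 0 := by
  constructor
  · rintro ⟨w, hw⟩
    have : d.E (x, y) = d.E (w, 0) := by simp [E_apply, hw]
    have := d.E.injective this
    simp at this; exact this.2
  · rintro rfl
    exact ⟨x, by simp⟩

theorem unit_D (d : QD q k S) : IsUnit d.D := by
  rw [unit_iff]
  intro h
  exact d.hD (by rw [h]; exact IsSquare.zero)

theorem unit_r (d : QD q k S) : IsUnit d.r := by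
  have := d.unit_D.map am
  rw [← d.hr] at this
  exact isUnit_of_mul_isUnit_left this

theorem nontriv (d : QD q k S) : Nontrivial S := by
  have : Nontrivial Zk := ZMod.nontrivial_iff.2 (by
    exact (Nat.one_lt_pow (Nat.succ_ne_zero k) hq.out.one_lt).ne')
  exact d.inj.nontrivial

theorem not_unit_q_mul (d : QD q k S) (s : S) : ¬ IsUnit ((q : S) * s) := by
  have := d.nontriv
  intro h
  have h1 : IsNilpotent (q : S) := by
    refine ⟨k+1, ?_⟩
    have := map_natCast am (q ^ (k+1))
    rw [ZMod.natCast_self, map_zero] at this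
    rw [← Nat.cast_pow, ← this]
  exact (isUnit_of_mul_isUnit_left h).not_isNilpotent h1

theorem nonunit_E (d : QD q k S) (p : Zk × Zk) :
    ¬ IsUnit (d.E p) ↔ ¬ IsUnit p.1 ∧ ¬ IsUnit p.2 := by
  obtain ⟨x, y⟩ := p
  constructor
  · intro h
    by_contra hc
    apply h
    have h1 : IsUnit (x * x - d.D * (y * y)) := by
      rw [unit_iff]
      intro h0
      simp only [map_sub, map_mul] at h0
      have h2 := d.hD
      by_cases hy : redq q k y = 0
      · have hx : redq q k x = 0 := by simpa [hy] using h0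
        apply hc
        rw [unit_iff, unit_iff]; simp [hx, hy]
      · apply h2
        refine ⟨redq q k x / redq q k y, ?_⟩
        field_simp
        linear_combination -h0
    have h3 := h1.map am
    have h4 : am (x * x - d.D * (y * y)) = d.E (x, y) * (am x - am y * d.r) := by
      simp only [E_apply, map_sub, map_mul]
      linear_combination (am y)^2 * d.hr
    rw [h4] at h3
    exact isUnit_of_mul_isUnit_left h3
  · rintro ⟨hx, hy⟩
    obtain ⟨x', rfl⟩ := (nonunit_iff q k _).1 hx
    obtain ⟨y', rfl⟩ := (nonunit_iff q k _).1 hy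
    have : d.E ((q : Zk) * x', (q : Zk) * y') = (q : S) * (d.E (x', y')) := by
      simp [E_apply]; ring
    rw [this]
    exact d.not_unit_q_mul _

theorem nonunit_iff' (d : QD q k S) (s : S) (hs : ¬ IsUnit s) : ∃ t, s = q * t := by
  obtain ⟨⟨x, y⟩, rfl⟩ := d.E.surjective s
  obtain ⟨hx, hy⟩ := (d.nonunit_E _).1 hs
  obtain ⟨x', rfl⟩ := (nonunit_iff q k _).1 hx
  obtain ⟨y', rfl⟩ := (nonunit_iff q k _).1 hy
  exact ⟨d.E (x', y'), by simp [E_apply]; ring⟩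

theorem card_nonunit_S (d : QD q k S) : Nat.card {s : S // ¬ IsUnit s} = q ^ k * q ^ k := by
  have e : {p : Zk × Zk // ¬ IsUnit p.1 ∧ ¬ IsUnit p.2} ≃ {s : S // ¬ IsUnit s} :=
    d.E.subtypeEquiv (fun p => (d.nonunit_E p).symm)
  rw [← Nat.card_congr e, card_and (fun x : Zk => ¬ IsUnit x) (fun x : Zk => ¬ IsUnit x), card_nonunit]

theorem card_units_image (d : QD q k S) :
    Nat.card {s : S // ∃ u : Zkˣ, s = am u} = Nat.card {x : Zk // IsUnit x} := by
  refine (Nat.card_congr (Equiv.ofBijective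
    (fun x : {x : Zk // IsUnit x} => (⟨am x.1, x.2.unit, rfl⟩ : {s : S // ∃ u : Zkˣ, s = am u})) ⟨?_, ?_⟩)).symm
  · intro x y h
    exact Subtype.ext (d.inj (congrArg Subtype.val h))
  · rintro ⟨_, u, rfl⟩
    exact ⟨⟨u, u.isUnit⟩, rfl⟩

theorem card_row (d : QD q k S) (a b : S) (h : ¬ (¬ IsUnit a ∧ ¬ IsUnit b)) :
    Nat.card {p : S × S // ∃ u : Zkˣ, a * p.2 - b * p.1 = am u}
      = Nat.card S * Nat.card {x : Zk // IsUnit x} := by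
  have := d.fin
  let f : S × S →+ S := ⟨⟨fun p => a * p.2 - b * p.1, by simp⟩, fun x y => by simp; ring⟩
  have hf : Function.Surjective f := by
    intro z
    by_cases ha : IsUnit a
    · obtain ⟨u, rfl⟩ := ha
      exact ⟨(0, ↑u⁻¹ * z), by simp [f]⟩
    · have hb : IsUnit b := by tauto
      obtain ⟨u, rfl⟩ := hb
      exact ⟨(-(↑u⁻¹ * z), 0), by simp [f]⟩
  have := fib_count_surj f hf (fun s => ∃ u : Zkˣ, s = am u)
  rw [d.card_units_image, Nat.card_prod] at this
  have hS : 0 < Nat.card S := Nat.card_pos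
  apply Nat.eq_of_mul_eq_mul_right hS
  refine this.trans ?_
  ring

theorem card_row' (d : QD q k S) (a b : S) (h : (¬ IsUnit a ∧ ¬ IsUnit b)) :
    Nat.card {p : S × S // ∃ u : Zkˣ, a * p.2 - b * p.1 = am u} = 0 := by
  have : IsEmpty {p : S × S // ∃ u : Zkˣ, a * p.2 - b * p.1 = am u} := by
    constructor
    rintro ⟨⟨x, y⟩, u, hu⟩
    obtain ⟨a', rfl⟩ := d.nonunit_iff' a h.1
    obtain ⟨b', rfl⟩ := d.nonunit_iff' b h.2
    apply d.not_unit_q_mul (a' * y - b' * x)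
    have e : (q : S) * (a' * y - b' * x) = am u := by rw [← hu]; ring
    rw [e]
    exact u.isUnit.map am
  exact Nat.card_of_isEmpty

theorem card_A (d : QD q k S) :
    Nat.card {p : (S × S) × (S × S) // ∃ u : Zkˣ, p.1.1 * p.2.2 - p.1.2 * p.2.1 = am u}
     + (q ^ k)^4 * ((q ^ (k+1))^2 * Nat.card {x : Zk // IsUnit x})
     = (q ^ (k+1))^4 * ((q ^ (k+1))^2 * Nat.card {x : Zk // IsUnit x}) := by
  classical
  have := d.fin
  have := Fintype.ofFinite S
  set c := Nat.card S * Nat.card {x : Zk // IsUnit x} with hc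
  have h1 := card_prod_sum (fun (x y : S × S) => ∃ u : Zkˣ, x.1 * y.2 - x.2 * y.1 = am u)
  have h2 : ∀ x : S × S, Nat.card {y : S × S // ∃ u : Zkˣ, x.1 * y.2 - x.2 * y.1 = am u}
      = if ¬ (¬ IsUnit x.1 ∧ ¬ IsUnit x.2) then c else 0 := by
    intro x
    by_cases h : ¬ IsUnit x.1 ∧ ¬ IsUnit x.2
    · rw [if_neg (not_not.2 h)]; exact d.card_row' _ _ h
    · rw [if_pos h]; exact d.card_row _ _ h
  rw [Finset.sum_congr rfl (fun x _ => h2 x), ← Finset.sum_filter, Finset.sum_const, smul_eq_mul,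
    ← Fintype.card_subtype, ← Nat.card_eq_fintype_card] at h1
  have h3 := card_not (fun x : S × S => ¬ IsUnit x.1 ∧ ¬ IsUnit x.2)
  rw [card_and (fun x : S => ¬ IsUnit x) (fun x : S => ¬ IsUnit x), d.card_nonunit_S,
    Nat.card_prod, d.card_S] at h3
  rw [h1]
  rw [d.card_S] at hc
  have h4 : (q ^ (k+1))^4 = q ^ (k + 1) * q ^ (k + 1) * (q ^ (k + 1) * q ^ (k + 1)) := by ring
  rw [h4, ← h3, hc]; ring

theorem field_count (hq2 : q ≠ 2) (D w : ZMod q) (hD : ¬ IsSquare D) :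
    Nat.card {s : ZMod q // s ^ 2 ≠ w} + Nat.card {s : ZMod q // s ^ 2 ≠ D * w} + 2 = 2 * q := by
  classical
  have hc : ringChar (ZMod q) ≠ 2 := by rwa [ZMod.ringChar_zmod_n]
  have h : ∀ a : ZMod q, (Nat.card {s : ZMod q // s ^ 2 = a} : ℤ) = quadraticChar (ZMod q) a + 1 := by
    intro a
    rw [← quadraticChar_card_sqrts hc a, Nat.card_eq_fintype_card, Set.toFinset_card]
    rfl
  have h1 := h w
  have h2 := h (D * w)
  rw [map_mul, quadraticChar_neg_one_iff_not_isSquare.2 hD] at h2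
  have h3 := card_not (fun s : ZMod q => s ^ 2 = w)
  have h4 := card_not (fun s : ZMod q => s ^ 2 = D * w)
  rw [Nat.card_zmod] at h3 h4
  simp only [ne_eq]
  omega

/-- number of `s` with `s² - e` a unit of the base ring -/
noncomputable def G (e : S) : ℕ := Nat.card {s : Zk // ∃ u : Zkˣ, am (s^2) - e = am u}

theorem G_am (d : QD q k S) (w : Zk) :
    G (k := k) (q := q) (am w) = q ^ k * Nat.card {s : ZMod q // s ^ 2 ≠ redq q k w} := by
  rw [← card_redq q k (fun s => s ^ 2 ≠ redq q k w)]
  refine Nat.card_congr (Equiv.subtypeEquivRight fun s => ?_)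
  rw [← map_pow, ← sub_ne_zero, ← map_sub, ← map_sub, ← unit_iff]
  constructor
  · rintro ⟨u, hu⟩
    rw [d.inj hu]; exact u.isUnit
  · rintro ⟨u, hu⟩
    exact ⟨u, by rw [hu]⟩

theorem G_zero (e : S) (h : ¬ ∃ w, e = am w) : G (k := k) (q := q) e = 0 := by
  have : IsEmpty {s : Zk // ∃ u : Zkˣ, am (s^2) - e = am u} := by
    constructor
    rintro ⟨s, u, hu⟩
    exact h ⟨s^2 - u, by rw [map_sub, ← hu]; ring⟩
  exact Nat.card_of_isEmpty

open Classical in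
theorem G_add (d : QD q k S) (hq2 : q ≠ 2) (e : S) :
    G (k := k) (q := q) e + G (k := k) (q := q) (am d.D * e)
      = if ∃ w, e = am w then 2 * (q ^ k * (q - 1)) else 0 := by
  split_ifs with h
  · obtain ⟨w, rfl⟩ := h
    rw [← map_mul, d.G_am, d.G_am, map_mul, ← mul_add]
    have := field_count hq2 _ (redq q k w) d.hD
    have h2 : Nat.card {s : ZMod q // s ^ 2 ≠ redq q k w} +
      Nat.card {s : ZMod q // s ^ 2 ≠ redq q k d.D * redq q k w} = 2 * (q - 1) := by omega
    rw [h2]; ring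
  · rw [G_zero e h, G_zero]
    rintro ⟨w, hw⟩
    apply h
    obtain ⟨u, hu⟩ := d.unit_D
    refine ⟨↑u⁻¹ * w, ?_⟩
    rw [map_mul, ← hw, ← hu, ← mul_assoc, ← map_mul]
    simp

theorem card_V (d : QD q k S) (hq2 : q ≠ 2) :
    Nat.card {v : S × S × S // ∃ w, v.1 * v.1 + v.2.1 * v.2.2 = am w} = MM q (k+1) := by
  have h2 : IsUnit (2 : Zk) := by
    rw [unit_iff, map_ofNat]
    intro h
    have : ((2 : ℕ) : ZMod q) = 0 := by exact_mod_cast h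
    rw [ZMod.natCast_eq_zero_iff] at this
    exact hq2 ((Nat.prime_dvd_prime_iff_eq hq.out Nat.prime_two).1 this)
  obtain ⟨u, hu⟩ := h2
  let e : (Fin 3 → Zk) × (Fin 3 → Zk) ≃ S × S × S :=
    { toFun := fun p => (d.E (↑u⁻¹ * p.1 0, p.2 0), d.E (p.1 1, p.1 2), d.E (p.2 2, p.2 1))
      invFun := fun v => (![u * (d.E.symm v.1).1, (d.E.symm v.2.1).1, (d.E.symm v.2.1).2],
        ![(d.E.symm v.1).2, (d.E.symm v.2.2).2, (d.E.symm v.2.2).1])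
      left_inv := by
        rintro ⟨x, y⟩
        ext i
        · fin_cases i <;> simp
        · fin_cases i <;> simp
      right_inv := by
        rintro ⟨x, y, z⟩
        simp }
  refine (Nat.card_congr (e.subtypeEquiv ?_)).symm
  rintro ⟨x, y⟩
  have h5 : (e (x, y)).1 * (e (x, y)).1 + (e (x, y)).2.1 * (e (x, y)).2.2 =
     am ((↑u⁻¹ * x 0)^2 + d.D * (y 0)^2 + x 1 * y 2 + d.D * (x 2 * y 1)) + am (x ⬝ᵥ y) * d.r := by
    have h6 : am u * am (↑u⁻¹) = 1 := by rw [← map_mul]; simp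
    rw [hu, map_ofNat] at h6
    simp only [e, Equiv.coe_fn_mk, E_apply, dotProduct, Fin.sum_univ_three, map_add, map_mul, map_pow]
    linear_combination (am (y 0) ^ 2 + am (x 2) * am (y 1)) * d.hr + (am (x 0) * am (y 0) * d.r) * h6
  rw [h5, d.range_iff]

theorem card_At (d : QD q k S) (hq2 : q ≠ 2) :
    Nat.card {p : (S × S) × (S × S) // (∃ u : Zkˣ, p.1.1 * p.2.2 - p.1.2 * p.2.1 = am u) ∧
      ∃ z : Zk, p.1.1 + p.2.2 = am z} = MM q (k+1) * (q ^ k * (q - 1)) := by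
  classical
  have := d.fin
  have := Fintype.ofFinite S
  have h2 : IsUnit (2 : Zk) := by
    rw [unit_iff, map_ofNat]
    intro h
    have : ((2 : ℕ) : ZMod q) = 0 := by exact_mod_cast h
    rw [ZMod.natCast_eq_zero_iff] at this
    exact hq2 ((Nat.prime_dvd_prime_iff_eq hq.out Nat.prime_two).1 this)
  obtain ⟨t, ht⟩ := h2.exists_right_inv
  have ht' : (2 : S) * am t = 1 := by
    rw [← map_ofNat am 2, ← map_mul, ht, map_one]
  have step : Nat.card {p : (S × S) × (S × S) // (∃ u : Zkˣ, p.1.1 * p.2.2 - p.1.2 * p.2.1 = am u) ∧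
      ∃ z : Zk, p.1.1 + p.2.2 = am z} =
      Nat.card {p : (S × S × S) × Zk // ∃ u : Zkˣ, am (p.2 ^ 2) - (p.1.1 * p.1.1 + p.1.2.1 * p.1.2.2) = am u} := by
    refine (Nat.card_congr (Equiv.ofBijective (fun p => ⟨((am p.1.2 + p.1.1.1, p.1.1.2.1), (p.1.1.2.2, am p.1.2 - p.1.1.1)),
      (by
        obtain ⟨u, hu⟩ := p.2
        exact ⟨u, by rw [← hu, map_pow]; ring⟩),
      (⟨2 * p.1.2, by rw [map_mul, map_ofNat]; ring⟩)⟩) ⟨?_, ?_⟩)).symm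
    · rintro ⟨⟨⟨x, b, c⟩, s⟩, hp⟩ ⟨⟨⟨x', b', c'⟩, s'⟩, hp'⟩ h
      simp only [Subtype.mk.injEq, Prod.mk.injEq] at h
      obtain ⟨⟨h1, h2⟩, h3, h4⟩ := h
      have hs : am s = am s' := by linear_combination am t * (h1 + h4) - (am s - am s') * ht'
      have hx : x = x' := by linear_combination h1 - hs
      have := d.inj hs
      subst this hx h2 h3
      rfl
    · rintro ⟨⟨⟨a, b⟩, ⟨c, e⟩⟩, ⟨u, hu⟩, z, hz⟩
      simp only at hu hz
      refine ⟨⟨⟨⟨am t * (a - e), b, c⟩, t * z⟩, u, ?_⟩, ?_⟩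
      · rw [← hu, map_pow, map_mul, ← hz]
        linear_combination (a * e) * (2 * am t + 1) * ht'
      · simp only [Subtype.mk.injEq, Prod.mk.injEq, map_mul, ← hz]
        refine ⟨⟨?_, trivial⟩, trivial, ?_⟩
        · linear_combination a * ht'
        · linear_combination e * ht'
  have h3 := card_prod_sum (fun (v : S × S × S) (s : Zk) => ∃ u : Zkˣ, am (s ^ 2) - (v.1 * v.1 + v.2.1 * v.2.2) = am u)
  change _ = ∑ v : S × S × S, G (v.1 * v.1 + v.2.1 * v.2.2) at h3
  obtain ⟨ρ, hρ⟩ := d.unit_r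
  let sc : S × S × S ≃ S × S × S := (ρ.mulLeft).prodCongr ((ρ.mulLeft).prodCongr (ρ.mulLeft))
  have h4 : ∑ v : S × S × S, G (k := k) (q := q) (v.1 * v.1 + v.2.1 * v.2.2) =
      ∑ v : S × S × S, G (k := k) (q := q) (am d.D * (v.1 * v.1 + v.2.1 * v.2.2)) := by
    rw [← Equiv.sum_comp sc]
    refine Finset.sum_congr rfl fun v _ => ?_
    congr 1
    simp only [sc, Equiv.prodCongr_apply, Prod.map, Units.mulLeft_apply, hρ, ← d.hr]
    ring
  have h5 : 2 * ∑ v : S × S × S, G (k := k) (q := q) (v.1 * v.1 + v.2.1 * v.2.2) =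
      MM q (k+1) * (2 * (q ^ k * (q - 1))) := by
    rw [two_mul]
    nth_rewrite 2 [h4]
    rw [← Finset.sum_add_distrib, Finset.sum_congr rfl (fun v _ => d.G_add hq2 _), ← Finset.sum_filter,
      Finset.sum_const, smul_eq_mul, ← Fintype.card_subtype, ← Nat.card_eq_fintype_card, d.card_V hq2]
  rw [step, h3]
  linarith

end QD

theorem card_GL {Z S : Type} [CommRing Z] [CommRing S] [Algebra Z S] (Q : S → Prop) :
    Nat.card {σ : GL (Fin 2) S | (∃ u : Zˣ, (σ : Matrix (Fin 2) (Fin 2) S).det = algebraMap Z S u) ∧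
      Q (σ : Matrix (Fin 2) (Fin 2) S).trace} =
    Nat.card {p : (S × S) × (S × S) // (∃ u : Zˣ, p.1.1 * p.2.2 - p.1.2 * p.2.1 = algebraMap Z S u) ∧
      Q (p.1.1 + p.2.2)} := by
  refine Nat.card_congr (Equiv.ofBijective (fun σ => ⟨((σ.1.1 0 0, σ.1.1 0 1), (σ.1.1 1 0, σ.1.1 1 1)), ?_⟩) ⟨?_, ?_⟩)
  · have := σ.2
    simp only [Set.mem_ofPred_eq, Matrix.det_fin_two, Matrix.trace_fin_two] at this
    exact this
  · intro σ τ h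
    simp only [Subtype.mk.injEq, Prod.mk.injEq] at h
    apply Subtype.ext
    apply Units.ext
    ext i j
    fin_cases i <;> fin_cases j
    · exact h.1.1
    · exact h.1.2
    · exact h.2.1
    · exact h.2.2
  · rintro ⟨⟨⟨a, b⟩, ⟨c, e⟩⟩, ⟨u, hu⟩, hQ⟩
    have hdet : (!![a, b; c, e]).det = algebraMap Z S u := by rw [Matrix.det_fin_two]; simpa using hu
    refine ⟨⟨Matrix.GeneralLinearGroup.mk'' !![a, b; c, e] (by rw [hdet]; exact u.isUnit.map _), ?_, ?_⟩, ?_⟩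
    · exact ⟨u, hdet⟩
    · change Q (!![a, b; c, e]).trace
      rw [Matrix.trace_fin_two]; simpa using hQ
    · rfl

theorem MM_lim (q : ℕ) [hq : Fact q.Prime] :
    Tendsto (fun n => (MM q n : ℝ) / (q : ℝ) ^ (5 * n)) atTop
      (nhds (((q:ℝ)^3 - 1) / (q * ((q:ℝ)^2 - 1)))) := by
  have h1 : (1 : ℝ) < q := by exact_mod_cast hq.out.one_lt
  have h0 : (q : ℝ) ≠ 0 := by positivity
  have h2 : (q : ℝ) ^ 2 - 1 ≠ 0 := by nlinarith
  set L := ((q:ℝ)^3 - 1) / (q * ((q:ℝ)^2 - 1)) with hL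
  have h3 : ∀ n, (MM q n : ℝ) / (q : ℝ) ^ (5 * n) = L + (((q:ℝ)^2)⁻¹)^n * (MM q 0 - L) := by
    intro n
    induction n with
    | zero => simp
    | succ n ih =>
      have hrec : (MM q (n+1) : ℝ) + (q:ℝ) ^ (2 * (n+1)) * (q:ℝ) ^ (3*n) =
        (q:ℝ) ^ (2 * (n+1)) * (q:ℝ) ^ (3 * (n+1)) + (q:ℝ) ^ 3 * MM q n := by exact_mod_cast MM_rec q n
      have e1 : (MM q (n+1) : ℝ) / (q : ℝ) ^ (5 * (n+1)) =
          1 - ((q:ℝ)^3)⁻¹ + ((q:ℝ)^2)⁻¹ * (MM q n / (q : ℝ) ^ (5 * n)) := by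
        rw [eq_sub_of_add_eq hrec]
        field_simp
        ring
      have e2 : L = 1 - ((q:ℝ)^3)⁻¹ + ((q:ℝ)^2)⁻¹ * L := by
        rw [hL]; field_simp; ring
      rw [e1, ih, pow_succ]
      linear_combination -e2
  simp only [h3]
  have h4 : Tendsto (fun n : ℕ => (((q:ℝ)^2)⁻¹)^n) atTop (nhds 0) :=
    tendsto_pow_atTop_nhds_zero_of_lt_one (by positivity) (inv_lt_one_of_one_lt₀ (by nlinarith))
  simpa using (h4.mul_const ((MM q 0 : ℝ) - L)).const_add L

theorem AR_bij {Z : Type} [CommRing Z] [Nontrivial Z] (D : Z) :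
    Function.Bijective (fun p : Z × Z =>
      algebraMap Z (AdjoinRoot ((X : Z[X]) ^ 2 - C D)) p.1 +
      algebraMap Z (AdjoinRoot ((X : Z[X]) ^ 2 - C D)) p.2 * AdjoinRoot.root ((X : Z[X]) ^ 2 - C D)) := by
  set f := (X : Z[X]) ^ 2 - C D with hf
  have hm : f.Monic := monic_X_pow_sub_C D (by norm_num)
  have hdeg : f.degree = 2 := degree_X_pow_sub_C (by norm_num) D
  have hmk : ∀ x y : Z, algebraMap Z (AdjoinRoot f) x + algebraMap Z (AdjoinRoot f) y * AdjoinRoot.root f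
      = AdjoinRoot.mk f (C x + C y * X) := by
    intro x y
    simp [AdjoinRoot.algebraMap_eq]
  constructor
  · rintro ⟨x, y⟩ ⟨x', y'⟩ h
    simp only [hmk] at h
    rw [AdjoinRoot.mk_eq_mk] at h
    have h3 : C x + C y * X - (C x' + C y' * X) = C (y - y') * X + C (x - x') := by
      simp only [map_sub]; ring
    rw [h3] at h
    have h0 : C (y - y') * X + C (x - x') = 0 := by
      by_contra hne
      have := hm.not_dvd_of_degree_lt hne (by
        rw [hdeg]; exact (degree_linear_le).trans_lt (by norm_num))
      exact this h
    have c0 := congrArg (fun p => coeff p 0) h0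
    have c1 := congrArg (fun p => coeff p 1) h0
    simp [coeff_C, sub_eq_zero] at c0 c1
    rw [c0, c1]
  · intro s
    obtain ⟨g, rfl⟩ := AdjoinRoot.mk_surjective s
    have hg : AdjoinRoot.mk f g = AdjoinRoot.mk f (g %ₘ f) := by
      rw [AdjoinRoot.mk_eq_mk]
      exact ⟨g /ₘ f, by linear_combination -(modByMonic_add_div g f)⟩
    have hd : (g %ₘ f).degree ≤ 1 := by
      have := degree_modByMonic_lt g hm
      rw [hdeg] at this
      exact Order.le_of_lt_succ this
    refine ⟨((g %ₘ f).coeff 0, (g %ₘ f).coeff 1), ?_⟩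
    simp only [hmk]
    rw [hg]
    congr 1
    rw [add_comm]
    exact (eq_X_add_C_of_degree_le_one hd).symm

/-- For an odd prime `ℓ` and `D` a quadratic nonresidue modulo `ℓ`, the real sequence
`k ↦ ℓᵏ · #𝒜ᵗ_{ℓᵏ,I} / #𝒜_{ℓᵏ,I}` converges to `ℓ³(ℓ² + ℓ + 1)/((ℓ+1)(ℓ⁴ − 1))`. -/
theorem stmt_6 (ℓ : ℕ) (hℓ : ℓ.Prime) (hodd : ℓ ≠ 2) (D : ℤ)
    (hD : ¬ IsSquare (D : ZMod ℓ)) :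
    Tendsto (fun k : ℕ =>
      ((ℓ : ℝ) ^ k *
        (Nat.card {σ : GL (Fin 2) (InertRing ℓ k D) |
          (∃ u : (ZMod (ℓ ^ k))ˣ,
            (σ : Matrix (Fin 2) (Fin 2) (InertRing ℓ k D)).det =
              algebraMap (ZMod (ℓ ^ k)) (InertRing ℓ k D) (u : ZMod (ℓ ^ k))) ∧
          ∃ z : ZMod (ℓ ^ k),
            (σ : Matrix (Fin 2) (Fin 2) (InertRing ℓ k D)).trace =
              algebraMap (ZMod (ℓ ^ k)) (InertRing ℓ k D) z} : ℝ)) /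
        (Nat.card {σ : GL (Fin 2) (InertRing ℓ k D) |
          ∃ u : (ZMod (ℓ ^ k))ˣ,
            (σ : Matrix (Fin 2) (Fin 2) (InertRing ℓ k D)).det =
              algebraMap (ZMod (ℓ ^ k)) (InertRing ℓ k D) (u : ZMod (ℓ ^ k))} : ℝ))
      atTop
      (nhds ((ℓ : ℝ) ^ 3 * ((ℓ : ℝ) ^ 2 + ℓ + 1) / (((ℓ : ℝ) + 1) * ((ℓ : ℝ) ^ 4 - 1)))) := by
  have hq : Fact ℓ.Prime := ⟨hℓ⟩
  rw [← tendsto_add_atTop_iff_nat 1]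
  have h1 : (1 : ℝ) < ℓ := by exact_mod_cast hℓ.one_lt
  have h0 : (ℓ : ℝ) ≠ 0 := by positivity
  have h2 : (ℓ : ℝ) ^ 2 - 1 ≠ 0 := by nlinarith
  have h2' : (ℓ : ℝ) - 1 ≠ 0 := by linarith
  have h2'' : (ℓ : ℝ) + 1 ≠ 0 := by linarith
  have h4 : (ℓ : ℝ) ^ 4 - 1 ≠ 0 := by
    have := one_lt_pow₀ h1 (show 4 ≠ 0 by norm_num)
    linarith
  have lim := ((tendsto_add_atTop_iff_nat 1).2 (MM_lim ℓ)).mul_const ((ℓ:ℝ)^4 / ((ℓ:ℝ)^4 - 1))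
  have hlim : (((ℓ:ℝ)^3 - 1) / (ℓ * ((ℓ:ℝ)^2 - 1))) * ((ℓ:ℝ)^4 / ((ℓ:ℝ)^4 - 1)) =
      (ℓ : ℝ) ^ 3 * ((ℓ : ℝ) ^ 2 + ℓ + 1) / (((ℓ : ℝ) + 1) * ((ℓ : ℝ) ^ 4 - 1)) := by
    rw [div_mul_div_comm, div_eq_div_iff (by positivity) (by positivity)]
    ring
  rw [hlim] at lim
  refine lim.congr fun k => ?_
  have : Nontrivial (ZMod (ℓ ^ (k+1))) := ZMod.nontrivial_iff.2 (by
    exact (Nat.one_lt_pow (Nat.succ_ne_zero k) hℓ.one_lt).ne')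
  let d : QD ℓ k (InertRing ℓ (k+1) D) :=
    { D := (D : ZMod (ℓ ^ (k+1)))
      r := AdjoinRoot.root _
      hr := by
        have := AdjoinRoot.eval₂_root ((X : Polynomial (ZMod (ℓ ^ (k+1)))) ^ 2 - C (D : ZMod (ℓ ^ (k+1))))
        rw [eval₂_sub, eval₂_pow, eval₂_X, eval₂_C, sub_eq_zero] at this
        exact (pow_two _).symm.trans this
      hb := AR_bij _
      hD := by rw [map_intCast]; exact hD }
  have hA := d.card_A
  have hAt := d.card_At hodd
  have g1 := card_GL (Z := ZMod (ℓ ^ (k+1))) (S := InertRing ℓ (k+1) D)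
    (fun s => ∃ z, s = algebraMap (ZMod (ℓ ^ (k+1))) _ z)
  have g2 := card_GL (Z := ZMod (ℓ ^ (k+1))) (S := InertRing ℓ (k+1) D) (fun _ => True)
  simp only [and_true] at g2
  rw [← g2] at hA
  rw [← g1] at hAt
  rw [hAt]
  have hU := card_unit ℓ k
  set A := Nat.card {σ : GL (Fin 2) (InertRing ℓ (k+1) D) |
          ∃ u : (ZMod (ℓ ^ (k+1)))ˣ,
            (σ : Matrix (Fin 2) (Fin 2) (InertRing ℓ (k+1) D)).det =
              algebraMap (ZMod (ℓ ^ (k+1))) (InertRing ℓ (k+1) D) (u : ZMod (ℓ ^ (k+1)))}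
  have hU' : (Nat.card {x : ZMod (ℓ ^ (k+1)) // IsUnit x} : ℝ) = (ℓ:ℝ)^k * (ℓ - 1) := by
    have : (Nat.card {x : ZMod (ℓ ^ (k+1)) // IsUnit x} : ℝ) + (ℓ:ℝ)^k = (ℓ:ℝ)^(k+1) := by
      exact_mod_cast hU
    rw [eq_sub_of_add_eq this]; ring
  have hA' : (A : ℝ) = ((ℓ:ℝ)^4 - 1) * (ℓ:ℝ)^(4*k) * ((ℓ:ℝ)^(2*(k+1)) * ((ℓ:ℝ)^k * (ℓ - 1))) := by
    have : (A : ℝ) + ((ℓ:ℝ) ^ k)^4 * (((ℓ:ℝ) ^ (k+1))^2 * (Nat.card {x : ZMod (ℓ ^ (k+1)) // IsUnit x} : ℝ))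
      = ((ℓ:ℝ) ^ (k+1))^4 * (((ℓ:ℝ) ^ (k+1))^2 * (Nat.card {x : ZMod (ℓ ^ (k+1)) // IsUnit x} : ℝ)) := by
      exact_mod_cast hA
    rw [hU'] at this
    rw [eq_sub_of_add_eq this]; ring
  rw [hA']
  have hs : ((ℓ - 1 : ℕ) : ℝ) = (ℓ : ℝ) - 1 := by
    rw [Nat.cast_sub hℓ.one_lt.le, Nat.cast_one]
  push_cast [hs]
  field_simp
  ring
end

section
/- Let ℓ be an odd prime. For each k ≥ 1 let 𝒜_{ℓᵏ,S} = {(τ, τ') ∈ GL₂(ℤ/ℓᵏℤ)² | det τ = det τ'} and 𝒜ᵗ_{ℓᵏ,S} = {(τ, τ') ∈ GL₂(ℤ/ℓᵏℤ)² | τ and τ' have the same characteristic polynomial}. Then the sequence k ↦ ℓᵏ · #𝒜ᵗ_{ℓᵏ,S} / #𝒜_{ℓᵏ,S} (a sequence of real numbers) converges as k → ∞ to ℓ²(ℓ³ + ℓ² − ℓ − 2)/((ℓ² − 1)²(ℓ + 1)). -/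
open Matrix Filter
set_option linter.unusedSectionVars false
set_option linter.unusedVariables false
set_option linter.unusedSimpArgs false
namespace Cnt
open Classical in
noncomputable def U {R : Type} [CommRing R] (x : R) : ℝ := if IsUnit x then 1 else 0
noncomputable def M {R : Type} [CommRing R] (x : R) : ℝ := 1 - U x
open Classical in
noncomputable def dl {R : Type} (x y : R) : ℝ := if x = y then 1 else 0

section
variable {R : Type} [CommRing R]

lemma U_of {x : R} (h : IsUnit x) : U x = 1 := by simp [U, h]
lemma U_not {x : R} (h : ¬ IsUnit x) : U x = 0 := by simp [U, h]
lemma M_of {x : R} (h : IsUnit x) : M x = 0 := by simp [M, U, h]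
lemma M_not {x : R} (h : ¬ IsUnit x) : M x = 1 := by simp [M, U, h]
lemma U_mul (x y : R) : U (x * y) = U x * U y := by
  by_cases hx : IsUnit x <;> by_cases hy : IsUnit y <;> simp [U, IsUnit.mul_iff, hx, hy]
lemma U_sq (x : R) : U x * U x = U x := by
  by_cases h : IsUnit x <;> simp [U, h]
lemma UM (x : R) : U x + M x = 1 := by simp [M]

lemma nu_add [IsLocalRing R] {x y : R} (hy : ¬ IsUnit y) : IsUnit (x + y) ↔ IsUnit x := by
  constructor
  · intro h
    by_contra hx
    exact IsLocalRing.nonunits_add hx hy h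
  · intro h
    by_contra hx
    have : ¬ IsUnit (-y) := by simpa using hy
    apply IsLocalRing.nonunits_add hx this
    simpa using h

lemma U_add [IsLocalRing R] {x y : R} (hy : ¬ IsUnit y) : U (x + y) = U x := by
  by_cases h : IsUnit x
  · rw [U_of h, U_of ((nu_add hy).2 h)]
  · rw [U_not h, U_not (fun h' => h ((nu_add hy).1 h'))]
lemma M_add [IsLocalRing R] {x y : R} (hy : ¬ IsUnit y) : M (x + y) = M x := by
  simp [M, U_add hy]
lemma U_neg (x : R) : U (-x) = U x := by
  by_cases h : IsUnit x
  · rw [U_of h, U_of h.neg]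
  · rw [U_not h, U_not (by simpa using h)]
lemma M_neg (x : R) : M (-x) = M x := by simp [M, U_neg]
lemma U_congr [IsLocalRing R] {x y : R} (h : ¬ IsUnit (x - y)) : U x = U y := by
  have := U_add (x := y) h
  simpa using this

variable [Fintype R]
noncomputable def ph (R : Type) [CommRing R] [Fintype R] : ℝ := ∑ x : R, U x
noncomputable def nn (R : Type) [CommRing R] [Fintype R] : ℝ := ∑ x : R, M x
noncomputable def qq (R : Type) [CommRing R] [Fintype R] : ℝ := ∑ x : R, (1:ℝ)

lemma qq_eq : qq R = ph R + nn R := by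
  simp only [qq, ph, nn, ← Finset.sum_add_distrib, UM]

lemma sum_one : ∑ x : R, (1:ℝ) = qq R := rfl
lemma sum_c (c : ℝ) : ∑ x : R, c = qq R * c := by
  simp [qq]

/-- affine change of variable -/
lemma sum_aff {a : R} (ha : IsUnit a) (e : R) (F : R → ℝ) :
    ∑ x : R, F (e + a * x) = ∑ x : R, F x := by
  obtain ⟨a, rfl⟩ := ha
  exact Equiv.sum_comp ((Units.mulLeft a).trans (Equiv.addLeft e)) F

lemma sum_shift (e : R) (F : R → ℝ) : ∑ x : R, F (e + x) = ∑ x : R, F x :=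
  Equiv.sum_comp (Equiv.addLeft e) F

lemma sum_dlF (m : R) (F : R → ℝ) : ∑ x : R, dl m x * F x = F m := by
  rw [Finset.sum_eq_single m]
  · simp [dl]
  · intro b _ hb
    simp [dl, hb.symm]
  · simp

lemma sum_dl (m : R) : ∑ x : R, dl m x = 1 := by
  simpa using sum_dlF m (fun _ => 1)

lemma dl_sub (t x y : R) : dl (t + x) y = dl (y - t) x := by
  unfold dl
  congr 1
  apply propext
  constructor
  · rintro rfl; ring
  · rintro rfl; ring

lemma sum_solve {a : R} (ha : IsUnit a) (m : R) : ∑ x : R, dl m (a * x) = 1 := by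
  have := sum_aff ha 0 (fun x => dl m x)
  simpa [sum_dl] using this

noncomputable def h3 (m : R) : ℝ := ∑ b : R, ∑ c : R, M b * M c * dl m (b * c)

/-- number of factorisations -/
lemma H_eq (m : R) : ∑ b : R, ∑ c : R, dl m (b * c) = ph R + ph R * M m + h3 m := by
  have e : ∀ b c : R, dl m (b * c) = U b * dl m (b * c) + M m * (U c * dl m (c * b))
      + M b * M c * dl m (b * c) := by
    intro b c
    by_cases hm : m = b * c
    · by_cases hb : IsUnit b <;> by_cases hc : IsUnit c <;>
      simp [hm, dl, M, U_mul, mul_comm c b, U_of, U_not, hb, hc]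
    · simp [dl, hm, mul_comm c b]
  have e1 : ∑ b : R, ∑ c : R, U b * dl m (b * c) = ph R := by
    unfold ph
    refine Finset.sum_congr rfl fun b _ => ?_
    rw [← Finset.mul_sum]
    by_cases hb : IsUnit b
    · rw [sum_solve hb, mul_one]
    · simp [U_not hb]
  rw [Finset.sum_congr rfl fun b _ => Finset.sum_congr rfl fun c _ => e b c]
  simp only [Finset.sum_add_distrib]
  rw [e1, h3]
  congr 2
  rw [Finset.sum_comm]
  simp only [← Finset.mul_sum] at e1 ⊢
  rw [e1, mul_comm]

lemma sum4_comm (f : R → R → R → R → ℝ) : ∑ a : R, ∑ b : R, ∑ c : R, ∑ d : R, f a b c d =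
    ∑ c : R, ∑ d : R, ∑ a : R, ∑ b : R, f a b c d := by
  have := Finset.sum_comm (s := (Finset.univ : Finset (R × R))) (t := (Finset.univ : Finset (R × R)))
    (f := fun x y => f x.1 x.2 y.1 y.2)
  simpa only [Fintype.sum_prod_type] using this

variable [IsLocalRing R]

noncomputable def W (R : Type) [CommRing R] [Fintype R] : ℝ := ∑ s : R, ∑ u : R, U s * (U u * U (s + u))

lemma sumU : ∑ x : R, U x = ph R := rfl
lemma sumM : ∑ x : R, M x = nn R := rfl

lemma sumUshift (s : R) : ∑ x : R, U (s + x) = ph R := sum_shift s U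

lemma W_eq : W R = ph R * (ph R - nn R) := by
  unfold W
  have e0 : ph R * (ph R - nn R) = ∑ s : R, U s * (ph R - nn R) := by
    rw [← Finset.sum_mul, ph]
  rw [e0]
  refine Finset.sum_congr rfl fun s _ => ?_
  rw [← Finset.mul_sum]
  by_cases hs : IsUnit s
  · have e : ∀ u : R, U u * U (s + u) = U (s + u) - M u := by
      intro u
      by_cases hu : IsUnit u
      · simp [U_of hu, M_of hu]
      · simp [U_not hu, M_not hu, U_add hu, U_of hs]
    simp only [e, Finset.sum_sub_distrib, sumUshift, sumM]
  · simp [U_not hs]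

noncomputable def X (R : Type) [CommRing R] [Fintype R] : ℝ :=
  ∑ s : R, ∑ u : R, ∑ v : R, U (s + u) * U (s + v) * M (u * v)

lemma X_eq : X R = nn R * ph R ^ 2 + nn R * W R := by
  have e : ∀ s u v : R, U (s + u) * U (s + v) * M (u * v) =
      M u * (U s * U (s + v)) + M v * (U s * (U u * U (s + u))) := by
    intro s u v
    by_cases hu : IsUnit u <;> by_cases hv : IsUnit v
    · simp [M, U_mul, U_of hu, U_of hv]
    · simp [M, U_mul, U_of hu, U_not hv, U_add hv]; ring
    · simp [M, U_mul, U_not hu, U_of hv, U_add hu]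
    · simp [M, U_mul, U_not hu, U_not hv, U_add hu, U_add hv]
  simp only [X, e, Finset.sum_add_distrib, ← Finset.mul_sum, ← Finset.sum_mul, sumUshift, sumM, sumU, W]
  ring

lemma M_aff (t : R) : ∑ b : R, ∑ c : R, M (t + b * c) = ph R * nn R + nn R * qq R * M t := by
  have e : ∀ b : R, ∑ c : R, M (t + b * c) = U b * nn R + M b * (qq R * M t) := by
    intro b
    by_cases hb : IsUnit b
    · rw [sum_aff hb t M, U_of hb, M_of hb, sumM]; ring
    · have : ∀ c : R, M (t + b * c) = M t := fun c => M_add (by simp [IsUnit.mul_iff, hb])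
      simp only [this, sum_c, U_not hb, M_not hb]; ring
  simp only [e, Finset.sum_add_distrib, ← Finset.sum_mul, sumU, sumM]
  ring

/-- J -/
noncomputable def K (t : R) : ℝ := ∑ b : R, ∑ c : R, M b * M c * h3 (b * c - t)

lemma M_sub {b c : R} (hb : ¬ IsUnit b) (t : R) : M (b * c - t) = M t := by
  rw [← M_neg, neg_sub, sub_eq_add_neg, M_add]
  simp [IsUnit.mul_iff, hb]

lemma J_eq (t : R) : ∑ b : R, ∑ c : R, h3 (t + b * c) =
    nn R ^ 2 * ph R + nn R ^ 2 * ph R * M t + K t := by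
  have e : ∑ b : R, ∑ c : R, h3 (t + b * c) =
      ∑ b : R, ∑ c : R, M b * M c * ∑ b' : R, ∑ c' : R, dl (b * c - t) (b' * c') := by
    simp only [h3, Finset.mul_sum]
    rw [sum4_comm]
    refine Finset.sum_congr rfl fun b _ => Finset.sum_congr rfl fun c _ =>
      Finset.sum_congr rfl fun b' _ => Finset.sum_congr rfl fun c' _ => ?_
    rw [dl_sub]
  have e2 : ∀ b c : R, M b * M c * (ph R + ph R * M (b * c - t) + h3 (b * c - t)) =
     M b * (M c * (ph R + ph R * M t)) + M b * M c * h3 (b * c - t) := by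
    intro b c
    by_cases hb : IsUnit b
    · simp [M_of hb]
    · rw [M_sub hb]; ring
  simp only [e, H_eq, e2, Finset.sum_add_distrib, ← Finset.mul_sum, ← Finset.sum_mul, sumM, K]
  ring


/-- all variables non-units -/
noncomputable def N6 (R : Type) [CommRing R] [Fintype R] : ℝ :=
  ∑ a : R, ∑ b : R, ∑ c : R, ∑ d : R, M a * M b * (M c * M d) * h3 (c * d - a * b)

lemma nu_sub {a c : R} (ha : ¬ IsUnit a) (hc : ¬ IsUnit c) (b d : R) : ¬ IsUnit (c * d - a * b) := by
  rw [sub_eq_add_neg, nu_add (by simp [IsUnit.mul_iff, ha])]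
  simp [IsUnit.mul_iff, hc]

lemma HW {m : R} (hm : ¬ IsUnit m) (s : R) :
    ∑ u : R, ∑ v : R, U (s + u) * U (s + v) * dl m (u * v) =
      2 * (∑ u : R, U s * (U u * U (s + u))) + U s * h3 m := by
  have e : ∀ u v : R, U (s + u) * U (s + v) * dl m (u * v) =
      U s * (U u * U (s + u)) * dl m (u * v) + U s * (U v * U (s + v)) * dl m (v * u) +
      U s * (M u * M v * dl m (u * v)) := by
    intro u v
    by_cases h : m = u * v
    · rw [mul_comm v u]
      by_cases hu : IsUnit u <;> by_cases hv : IsUnit v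
      · exact absurd (h ▸ hu.mul hv) hm
      · rw [U_of hu, U_not hv, M_of hu, M_not hv, U_add hv]; ring
      · simp [U_not hu, U_of hv, M_not hu, M_of hv, U_add hu]
      · rw [U_not hu, U_not hv, M_not hu, M_not hv, U_add hu, U_add hv, U_sq]; ring
    · simp [dl, h, mul_comm v u]
  have e1 : ∑ u : R, ∑ v : R, U s * (U u * U (s + u)) * dl m (u * v) =
      ∑ u : R, U s * (U u * U (s + u)) := by
    refine Finset.sum_congr rfl fun u _ => ?_
    rw [← Finset.mul_sum]
    by_cases hu : IsUnit u
    · rw [sum_solve hu, mul_one]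
    · simp [U_not hu]
  have e2 : ∑ u : R, ∑ v : R, U s * (U v * U (s + v)) * dl m (v * u) =
      ∑ u : R, U s * (U u * U (s + u)) := by
    rw [Finset.sum_comm, e1]
  simp only [e, Finset.sum_add_distrib]
  rw [e1, e2, h3]
  simp only [← Finset.mul_sum]
  ring

lemma dl_comm' (a b t : R) : dl (a - t) b = dl (a - b) t := by
  unfold dl
  congr 1
  apply propext
  constructor
  · rintro rfl; ring
  · rintro rfl; ring

lemma K_swap (G : R → R → ℝ) : ∑ u : R, ∑ v : R, G u v * K (u * v) =
    ∑ a : R, ∑ b : R, ∑ c : R, ∑ d : R, M a * M b * (M c * M d) *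
      ∑ u : R, ∑ v : R, G u v * dl (c * d - a * b) (u * v) := by
  simp only [K, h3, Finset.mul_sum]
  have e1 : ∀ u v : R, ∑ b : R, ∑ c : R, ∑ b' : R, ∑ c' : R,
      G u v * (M b * M c * (M b' * M c' * dl (b * c - u * v) (b' * c'))) =
      ∑ x : (R × R) × (R × R), M x.1.1 * M x.1.2 * (M x.2.1 * M x.2.2) *
       (G u v * dl (x.2.1 * x.2.2 - x.1.1 * x.1.2) (u * v)) := by
    intro u v
    rw [sum4_comm]
    simp only [Fintype.sum_prod_type]
    refine Finset.sum_congr rfl fun b _ => Finset.sum_congr rfl fun c _ =>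
      Finset.sum_congr rfl fun b' _ => Finset.sum_congr rfl fun c' _ => ?_
    rw [dl_comm' (b' * c') (b * c)]
    ring
  simp only [e1]
  have := Finset.sum_comm (s := (Finset.univ : Finset (R × R)))
    (t := (Finset.univ : Finset ((R × R) × (R × R))))
    (f := fun y x => M x.1.1 * M x.1.2 * (M x.2.1 * M x.2.2) *
       (G y.1 y.2 * dl (x.2.1 * x.2.2 - x.1.1 * x.1.2) (y.1 * y.2)))
  simpa only [Fintype.sum_prod_type] using this

lemma sumMMMM (c0 : ℝ) : ∑ a : R, ∑ b : R, ∑ c : R, ∑ d : R, M a * M b * (M c * M d) * c0 =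
    nn R ^ 4 * c0 := by
  simp only [← Finset.mul_sum, ← Finset.sum_mul, sumM]
  ring

lemma sumK_w (s : R) : ∑ u : R, ∑ v : R, U (s + u) * U (s + v) * K (u * v) =
    nn R ^ 4 * (2 * (∑ u : R, U s * (U u * U (s + u)))) + U s * N6 R := by
  rw [K_swap, ← sumMMMM, N6]
  simp only [Finset.mul_sum _ _ (U s), ← Finset.sum_add_distrib]
  refine Finset.sum_congr rfl fun a _ => Finset.sum_congr rfl fun b _ =>
      Finset.sum_congr rfl fun c _ => Finset.sum_congr rfl fun d _ => ?_
  by_cases ha : IsUnit a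
  · simp [M_of ha]
  by_cases hc : IsUnit c
  · simp [M_of hc]
  rw [HW (nu_sub ha hc b d)]
  ring

lemma sumK : ∑ u : R, ∑ v : R, K (u * v) = nn R ^ 4 * (2 * ph R) + N6 R := by
  have := K_swap (R := R) (fun _ _ => 1)
  simp only [one_mul] at this
  rw [this, ← sumMMMM, N6]
  simp only [← Finset.sum_add_distrib]
  refine Finset.sum_congr rfl fun a _ => Finset.sum_congr rfl fun b _ =>
      Finset.sum_congr rfl fun c _ => Finset.sum_congr rfl fun d _ => ?_
  by_cases ha : IsUnit a
  · simp [M_of ha]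
  by_cases hc : IsUnit c
  · simp [M_of hc]
  rw [H_eq, M_not (nu_sub ha hc b d)]
  ring

noncomputable def S (R : Type) [CommRing R] [Fintype R] : ℝ :=
  ∑ u : R, ∑ v : R, ∑ b : R, ∑ c : R, ∑ b' : R, ∑ c' : R, dl (u * v + b * c) (b' * c')

lemma S_eq : S R = ph R * qq R ^ 4 + ph R * (qq R ^ 2 * (ph R * nn R) +
      nn R * qq R * (ph R * nn R + nn R * qq R)) +
    (qq R ^ 2 * (nn R ^ 2 * ph R) + nn R ^ 2 * ph R * (ph R * nn R + nn R * qq R) +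
      (nn R ^ 4 * (2 * ph R) + N6 R)) := by
  have x1 : ∑ u : R, ∑ v : R, M (u * v) = ph R * nn R + nn R * qq R := by
    have := M_aff (0 : R)
    simpa [M_not] using this
  simp only [S, H_eq, Finset.sum_add_distrib, ← Finset.mul_sum, M_aff, J_eq, x1, sumK]
  simp only [sum_c]
  ring

noncomputable def G (R : Type) [CommRing R] [Fintype R] : ℝ :=
  ∑ s : R, ∑ p : R, ∑ b : R, ∑ c : R, U (s * p - b * c)

lemma U_aff (t : R) : ∑ b : R, ∑ c : R, U (t - b * c) = ph R * ph R + nn R * qq R * U t := by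
  have e : ∀ b : R, ∑ c : R, U (t - b * c) = U b * ph R + M b * (qq R * U t) := by
    intro b
    simp only [sub_eq_add_neg, ← neg_mul]
    by_cases hb : IsUnit b
    · rw [sum_aff hb.neg t U, U_of hb, M_of hb, sumU]; ring
    · have : ∀ c : R, U (t + -b * c) = U t := fun c => U_add (by simp [IsUnit.mul_iff, hb])
      simp only [this, sum_c, U_not hb, M_not hb]; ring
  simp only [e, Finset.sum_add_distrib, ← Finset.sum_mul, sumU, sumM]
  ring

lemma G_eq : G R = qq R ^ 2 * ph R ^ 2 + nn R * qq R * ph R ^ 2 := by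
  simp only [G, U_aff, Finset.sum_add_distrib, ← Finset.mul_sum, U_mul, ← Finset.sum_mul, sumU, sum_c]
  ring

noncomputable def T (R : Type) [CommRing R] [Fintype R] : ℝ :=
  ∑ s : R, ∑ u : R, ∑ v : R, ∑ b : R, ∑ c : R, ∑ b' : R, ∑ c' : R,
    U (s * (s + u + v) - b * c) * dl (u * v + b * c) (b' * c')

lemma UD {s u v b c : R} (h : ¬ IsUnit (u * v + b * c)) :
    U (s * (s + u + v) - b * c) = U (s + u) * U (s + v) := by
  rw [← U_mul]
  apply U_congr
  have : s * (s + u + v) - b * c - (s + u) * (s + v) = -(u * v + b * c) := by ring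
  rw [this, IsUnit.neg_iff]
  exact h

lemma h3_unit {m : R} (h : IsUnit m) : h3 m = 0 := by
  unfold h3
  refine Finset.sum_eq_zero fun b _ => Finset.sum_eq_zero fun c _ => ?_
  by_cases hm : m = b * c
  · rw [hm, IsUnit.mul_iff] at h
    simp [M_of h.1]
  · simp [dl, hm]

lemma T_eq : T R = ph R * (qq R * G R) +
    ph R * (qq R * ph R ^ 2 * (ph R * nn R) + nn R * qq R * X R) +
    (qq R * ph R ^ 2 * (nn R ^ 2 * ph R) + nn R ^ 2 * ph R * X R +
     (nn R ^ 4 * (2 * W R) + ph R * N6 R)) := by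
  have e : ∀ s u v b c : R, U (s * (s + u + v) - b * c) *
      (ph R + ph R * M (u * v + b * c) + h3 (u * v + b * c)) =
      ph R * U (s * (s + u + v) - b * c) +
      ph R * (U (s + u) * U (s + v) * M (u * v + b * c)) +
      U (s + u) * U (s + v) * h3 (u * v + b * c) := by
    intro s u v b c
    by_cases h : IsUnit (u * v + b * c)
    · rw [h3_unit h, M_of h]; ring
    · rw [UD h]; ring
  have g : ∑ s : R, ∑ u : R, ∑ v : R, ∑ b : R, ∑ c : R, U (s * (s + u + v) - b * c) =
      qq R * G R := by
    have : ∀ s u : R, ∑ v : R, ∑ b : R, ∑ c : R, U (s * (s + u + v) - b * c) =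
       ∑ v : R, ∑ b : R, ∑ c : R, U (s * v - b * c) := fun s u =>
       sum_shift (s + u) (fun v => ∑ b : R, ∑ c : R, U (s * v - b * c))
    simp only [this, sum_c, ← Finset.mul_sum, G]
  have q3 : ∑ s : R, ∑ u : R, ∑ v : R, U (s + u) * U (s + v) = qq R * ph R ^ 2 := by
    simp only [← Finset.mul_sum, ← Finset.sum_mul, sumUshift, sum_c]
    ring
  simp only [T, ← Finset.mul_sum, H_eq]
  simp only [e, Finset.sum_add_distrib]
  simp only [← Finset.mul_sum, g, M_aff, J_eq]
  simp only [mul_add, Finset.sum_add_distrib, sumK_w]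
  simp only [← mul_assoc, ← Finset.sum_mul, q3]
  have xx : ∀ c0 : ℝ, ∑ s : R, ∑ u : R, ∑ v : R, U (s + u) * U (s + v) * c0 * M (u * v) = c0 * X R := by
    intro c0
    simp only [X, Finset.mul_sum]
    refine Finset.sum_congr rfl fun a _ => Finset.sum_congr rfl fun b _ =>
      Finset.sum_congr rfl fun c _ => ?_
    ring
  have xx2 : ∀ c0 c1 : ℝ, ∑ s : R, ∑ u : R, ∑ v : R, U (s + u) * U (s + v) * c0 * c1 * M (u * v) = c0 * c1 * X R := by
    intro c0 c1
    rw [← xx]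
    simp only [mul_assoc]
  simp only [xx, xx2, sumU, W, Finset.mul_sum]
  simp only [mul_assoc]

noncomputable def D (R : Type) [CommRing R] [Fintype R] : ℝ :=
  ∑ s : R, ∑ p : R, ∑ b : R, ∑ c : R, ∑ s' : R, ∑ p' : R, ∑ b' : R, ∑ c' : R,
    U (s * p - b * c) * dl (s * p - b * c) (s' * p' - b' * c')

lemma SL {m : R} (hm : IsUnit m) : ∑ s' : R, ∑ p' : R, ∑ b' : R, ∑ c' : R,
    dl m (s' * p' - b' * c') = ph R * qq R * (qq R + nn R) := by
  have e : ∀ s' p' : R, ∑ b' : R, ∑ c' : R, dl m (s' * p' - b' * c') =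
      ∑ b' : R, ∑ c' : R, dl (s' * p' - m) (b' * c') := by
    intro s' p'
    refine Finset.sum_congr rfl fun b _ => Finset.sum_congr rfl fun c _ => ?_
    unfold dl
    congr 1
    apply propext
    constructor
    · rintro rfl; ring
    · intro h; rw [← h]; ring
  have e0 : ∀ s' : R, ∑ p' : R, ∑ b' : R, ∑ c' : R, dl m (s' * p' - b' * c') =
     U s' * (qq R * qq R) + M s' * (qq R * ph R) := by
    intro s'
    by_cases hs : IsUnit s'
    · rw [Finset.sum_comm]
      have : ∀ b' : R, ∑ p' : R, ∑ c' : R, dl m (s' * p' - b' * c') = qq R := by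
        intro b'
        rw [Finset.sum_comm]
        have : ∀ c' : R, ∑ p' : R, dl m (s' * p' - b' * c') = 1 := by
          intro c'
          have := sum_aff hs (-(b' * c')) (fun x => dl m x)
          rw [sum_dl] at this
          rw [← this]
          refine Finset.sum_congr rfl fun b _ => ?_
          congr 1; ring
        simp only [this, sum_one]
      simp only [this, sum_c, U_of hs, M_of hs]
      ring
    · have : ∀ p' : R, IsUnit (s' * p' - m) := by
        intro p'
        rw [← IsUnit.neg_iff, neg_sub, sub_eq_add_neg, nu_add (by simp [IsUnit.mul_iff, hs])]
        exact hm
      simp only [e, H_eq, h3_unit (this _), M_of (this _), sum_c, U_not hs, M_not hs]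
      ring
  simp only [e0, Finset.sum_add_distrib, ← Finset.sum_mul, sumU, sumM]
  ring

lemma D_eq : D R = G R * (ph R * qq R * (qq R + nn R)) := by
  simp only [D, G, Finset.sum_mul]
  refine Finset.sum_congr rfl fun a _ => Finset.sum_congr rfl fun b _ =>
      Finset.sum_congr rfl fun c _ => Finset.sum_congr rfl fun d _ => ?_
  simp only [← Finset.mul_sum]
  by_cases h : IsUnit (a * b - c * d)
  · rw [SL h]
  · simp [U_not h]
end
end Cnt
namespace Cnt

lemma card_eq_sum {α : Type} [Fintype α] (P : α → Prop) (f : α → ℝ) (h1 : ∀ x, P x → f x = 1)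
    (h0 : ∀ x, ¬ P x → f x = 0) : (Nat.card {x // P x} : ℝ) = ∑ x, f x := by
  classical
  rw [Nat.card_eq_fintype_card, Fintype.card_subtype, Finset.card_filter]
  push_cast
  refine Finset.sum_congr rfl fun x _ => ?_
  by_cases h : P x
  · simp [h, h1]
  · simp [h, h0]

instance isLocal (p k : ℕ) [Fact p.Prime] : IsLocalRing (ZMod (p ^ (k+1))) := by
  have : Fact (1 < p ^ (k+1)) := ⟨Nat.one_lt_pow (by omega) (Fact.out : p.Prime).one_lt⟩
  exact IsLocalRing.of_surjective' (PadicInt.toZModPow (p := p) (k+1)) (ZMod.ringHom_surjective _)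

lemma sum_hom {A B : Type} [AddCommGroup A] [AddCommGroup B] [Fintype A] [Fintype B] (f : A →+ B) :
    ∃ c : ℝ, ∀ F χ : B → ℝ, (∀ b, (∃ a, f a = b) → χ b = 1) → (∀ b, (¬ ∃ a, f a = b) → χ b = 0) →
      ∑ a : A, F (f a) = c * ∑ b : B, χ b * F b := by
  classical
  refine ⟨((Finset.univ.filter (fun a => f a = 0)).card : ℝ), fun F χ h1 h0 => ?_⟩
  rw [← Finset.sum_fiberwise (s := Finset.univ) (g := f), Finset.mul_sum]
  refine Finset.sum_congr rfl fun b _ => ?_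
  have e : ∀ a ∈ Finset.univ.filter (fun a => f a = b), F (f a) = F b := by
    intro a ha
    simp at ha
    rw [ha]
  rw [Finset.sum_congr rfl e, Finset.sum_const, nsmul_eq_mul]
  by_cases hb : b ∈ Set.range f
  · rw [h1 b hb, one_mul, AddMonoidHom.card_fiber_eq_of_mem_range f hb ⟨0, map_zero f⟩]
  · rw [h0 b hb]
    have : Finset.univ.filter (fun a => f a = b) = ∅ := by
      ext a
      simp only [Finset.mem_filter, Finset.mem_univ, true_and, Finset.notMem_empty, iff_false]
      exact fun h => hb ⟨a, h⟩
    simp [this]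

section
variable (p k : ℕ) [hp : Fact p.Prime]

lemma qq_val [NeZero (p ^ k)] : qq (ZMod (p ^ k)) = (p:ℝ) ^ k := by
  simp [qq, ZMod.card]

lemma ph_val : ph (ZMod (p ^ (k+1))) = (p:ℝ) ^ k * (p - 1) := by
  classical
  have h := ZMod.card_units_eq_totient (p ^ (k+1))
  rw [Nat.totient_prime_pow_succ hp.out] at h
  have h2 : ((Fintype.card (ZMod (p ^ (k+1)))ˣ : ℕ) : ℝ) = (p:ℝ) ^ k * (p - 1) := by
    rw [h]; push_cast [Nat.cast_sub hp.out.one_le]; ring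
  rw [← h2, ph]
  have : Fintype.card (ZMod (p ^ (k+1)))ˣ = Fintype.card {x : ZMod (p ^ (k+1)) // IsUnit x} :=
    Fintype.card_congr (Equiv.ofBijective (fun u => ⟨(u : ZMod (p ^ (k+1))), u.isUnit⟩)
      ⟨fun u v h => Units.ext (by simpa using h), fun ⟨x, hx⟩ => ⟨hx.unit, rfl⟩⟩)
  rw [this, ← Nat.card_eq_fintype_card]
  exact (card_eq_sum _ _ (fun x hx => U_of hx) (fun x hx => U_not hx)).symm

lemma nn_val : nn (ZMod (p ^ (k+1))) = (p:ℝ) ^ k := by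
  have h := qq_eq (R := ZMod (p ^ (k+1)))
  rw [qq_val, ph_val] at h
  linear_combination -h

lemma nonunit_iff (x : ZMod (p ^ (k+1))) : ¬ IsUnit x ↔ ∃ y, (p : ZMod (p ^ (k+1))) * y = x := by
  have hn : ((x.val : ℕ) : ZMod (p ^ (k+1))) = x := ZMod.natCast_zmod_val x
  constructor
  · intro h
    rw [← hn, ZMod.isUnit_iff_coprime, Nat.coprime_pow_right_iff (by omega), Nat.coprime_comm,
      Nat.Prime.coprime_iff_not_dvd hp.out, not_not] at h
    obtain ⟨y, hy⟩ := h
    exact ⟨y, by rw [← hn, hy]; push_cast; rfl⟩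
  · rintro ⟨y, rfl⟩ h
    have := isUnit_of_mul_isUnit_left h
    rw [ZMod.isUnit_iff_coprime, Nat.coprime_pow_right_iff (by omega), Nat.coprime_self] at this
    exact hp.out.one_lt.ne' this

lemma sum_mulp (F : ZMod (p ^ (k+1)) → ℝ) : ∑ a, F (p * a) = p * ∑ x, M x * F x := by
  classical
  obtain ⟨c, hc⟩ := sum_hom (AddMonoidHom.mulLeft (p : ZMod (p ^ (k+1))))
  have hc' : ∀ F : ZMod (p ^ (k+1)) → ℝ, ∑ a, F (p * a) = c * ∑ x, M x * F x := by
    intro F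
    exact hc F M (fun b hb => M_not ((nonunit_iff p k b).2 hb))
      (fun b hb => M_of (by
        by_contra h
        exact hb ((nonunit_iff p k b).1 h)))
  have h1 := hc' (fun _ => 1)
  simp only [mul_one, sum_one, sumM, nn_val, qq_val] at h1
  have hp0 : (p:ℝ) ^ k ≠ 0 := pow_ne_zero _ (by exact_mod_cast hp.out.ne_zero)
  have : c = p := by
    apply mul_right_cancel₀ hp0
    rw [← h1]; ring
  rw [hc', this]

lemma sum_cast (F : ZMod (p ^ k) → ℝ) :
    ∑ a : ZMod (p ^ (k+2)), F (ZMod.castHom (pow_dvd_pow p (Nat.le_add_right k 2)) (ZMod (p ^ k)) a) =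
      (p:ℝ) ^ 2 * ∑ x, F x := by
  classical
  obtain ⟨c, hc⟩ := sum_hom
    (ZMod.castHom (pow_dvd_pow p (Nat.le_add_right k 2)) (ZMod (p ^ k))).toAddMonoidHom
  have hs : ∀ x : ZMod (p ^ k), ∃ a,
    (ZMod.castHom (pow_dvd_pow p (Nat.le_add_right k 2)) (ZMod (p ^ k))).toAddMonoidHom a = x :=
    fun x => ZMod.castHom_surjective (pow_dvd_pow p (Nat.le_add_right k 2)) x
  replace hc := fun F => hc F (fun _ => 1) (fun _ _ => rfl) (fun b hb => absurd (hs b) hb)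
  simp only [one_mul] at hc
  have h1 := hc (fun _ => 1)
  simp only [sum_one, qq_val] at h1
  have hp0 : (p:ℝ) ^ k ≠ 0 := pow_ne_zero _ (by exact_mod_cast hp.out.ne_zero)
  have : c = p ^ 2 := by
    apply mul_right_cancel₀ hp0
    rw [← h1]; ring
  rw [← this]
  exact hc F

lemma sum6_mulp (F : ZMod (p ^ (k+1)) → ZMod (p ^ (k+1)) → ZMod (p ^ (k+1)) → ZMod (p ^ (k+1)) →
     ZMod (p ^ (k+1)) → ZMod (p ^ (k+1)) → ℝ) :
    ∑ a, ∑ b, ∑ c, ∑ d, ∑ e, ∑ f, F (p * a) (p * b) (p * c) (p * d) (p * e) (p * f) =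
    p ^ 6 * ∑ a, ∑ b, ∑ c, ∑ d, ∑ e, ∑ f, M a * M b * (M c * M d) * (M e * M f) * F a b c d e f := by
  have e1 := fun a b c d e => sum_mulp p k (fun f => F a b c d e f)
  simp only [e1]
  have e2 := fun a b c d => sum_mulp p k (fun e => p * ∑ f, M f * F a b c d e f)
  simp only [e2]
  have e3 := fun a b c => sum_mulp p k (fun d => p * ∑ e, M e * (p * ∑ f, M f * F a b c d e f))
  simp only [e3]
  have e4 := fun a b => sum_mulp p k (fun c => p * ∑ d, M d * (p * ∑ e, M e * (p * ∑ f, M f * F a b c d e f)))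
  simp only [e4]
  have e5 := fun a => sum_mulp p k (fun b => p * ∑ c, M c * (p * ∑ d, M d * (p * ∑ e, M e * (p * ∑ f, M f * F a b c d e f))))
  simp only [e5]
  rw [sum_mulp p k (fun a => p * ∑ b, M b * (p * ∑ c, M c * (p * ∑ d, M d * (p * ∑ e, M e * (p * ∑ f, M f * F a b c d e f)))))]
  simp only [Finset.mul_sum]
  refine Finset.sum_congr rfl fun a _ => Finset.sum_congr rfl fun b _ =>
      Finset.sum_congr rfl fun c _ => Finset.sum_congr rfl fun d _ =>
      Finset.sum_congr rfl fun e _ => Finset.sum_congr rfl fun f _ => ?_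
  ring

lemma sum6_cast (F : ZMod (p ^ k) → ZMod (p ^ k) → ZMod (p ^ k) → ZMod (p ^ k) →
     ZMod (p ^ k) → ZMod (p ^ k) → ℝ)
    (g : ZMod (p ^ (k+2)) →+* ZMod (p ^ k))
    (hg : g = ZMod.castHom (pow_dvd_pow p (Nat.le_add_right k 2)) (ZMod (p ^ k))) :
    ∑ a, ∑ b, ∑ c, ∑ d, ∑ e, ∑ f, F (g a) (g b) (g c) (g d) (g e) (g f) =
    p ^ 12 * ∑ a, ∑ b, ∑ c, ∑ d, ∑ e, ∑ f, F a b c d e f := by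
  have sc : ∀ F : ZMod (p ^ k) → ℝ, ∑ a, F (g a) = (p:ℝ) ^ 2 * ∑ x, F x := by
    subst hg
    exact sum_cast p k
  have e1 := fun a b c d e => sc (fun f => F a b c d e f)
  simp only [e1, ← Finset.mul_sum]
  have e2 := fun a b c d => sc (fun e => ∑ f, F a b c d e f)
  simp only [e2, ← Finset.mul_sum]
  have e3 := fun a b c => sc (fun d => ∑ e, ∑ f, F a b c d e f)
  simp only [e3, ← Finset.mul_sum]
  have e4 := fun a b => sc (fun c => ∑ d, ∑ e, ∑ f, F a b c d e f)
  simp only [e4, ← Finset.mul_sum]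
  have e5 := fun a => sc (fun b => ∑ c, ∑ d, ∑ e, ∑ f, F a b c d e f)
  simp only [e5, ← Finset.mul_sum]
  rw [sc (fun a => ∑ b, ∑ c, ∑ d, ∑ e, ∑ f, F a b c d e f)]
  ring

lemma N6_val : N6 (ZMod (p ^ (k+2))) = p ^ 6 * S (ZMod (p ^ k)) := by
  have hp0 : (p:ℝ) ≠ 0 := by exact_mod_cast hp.out.ne_zero
  set g := ZMod.castHom (pow_dvd_pow p (Nat.le_add_right k 2)) (ZMod (p ^ k)) with hg
  have key : ∀ x y : ZMod (p ^ (k+2)), (p:ZMod (p ^ (k+2))) ^ 2 * x = p ^ 2 * y ↔ g x = g y := by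
    intro x y
    rw [← sub_eq_zero, ← mul_sub, ← sub_eq_zero (a := g x), ← map_sub]
    generalize x - y = z
    have hz : ((z.val : ℕ) : ZMod (p ^ (k+2))) = z := ZMod.natCast_zmod_val z
    rw [← hz, map_natCast, ZMod.natCast_eq_zero_iff, ← Nat.cast_pow, ← Nat.cast_mul,
      ZMod.natCast_eq_zero_iff]
    generalize z.val = z
    rw [add_comm k 2, pow_add]
    exact Nat.mul_dvd_mul_iff_left (pow_pos hp.out.pos 2)
  have h1 := sum6_mulp p (k+1) (fun a b c d e f => dl (c * d - a * b) (e * f))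
  have h2 := sum6_cast p k (fun a b c d e f => dl (c * d - a * b) (e * f)) g hg
  have h3 : ∀ a b c d e f : ZMod (p ^ (k+2)),
    dl ((p:ZMod (p ^ (k+2))) * c * (p * d) - p * a * (p * b)) (p * e * (p * f)) =
    dl (g c * g d - g a * g b) (g e * g f) := by
    intro a b c d e f
    have := key (c * d - a * b) (e * f)
    simp only [map_sub, map_mul] at this
    unfold dl
    congr 1
    rw [← this]
    apply propext
    constructor <;> intro h
    · linear_combination h
    · linear_combination h
  have h4 := h1.symm
  simp only [h3] at h4
  have h5 := h4.trans h2
  have h6 : N6 (ZMod (p ^ (k+2))) = ∑ a : ZMod (p ^ (k+2)), ∑ b : ZMod (p ^ (k+2)), ∑ c : ZMod (p ^ (k+2)), ∑ d : ZMod (p ^ (k+2)), ∑ e : ZMod (p ^ (k+2)), ∑ f : ZMod (p ^ (k+2)),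
      M a * M b * (M c * M d) * (M e * M f) * dl (c * d - a * b) (e * f) := by
    simp only [N6, Cnt.h3, Finset.mul_sum, mul_assoc]
  have h7 : S (ZMod (p ^ k)) = ∑ a : ZMod (p ^ k), ∑ b : ZMod (p ^ k), ∑ c : ZMod (p ^ k), ∑ d : ZMod (p ^ k), ∑ e : ZMod (p ^ k), ∑ f : ZMod (p ^ k),
      dl (c * d - a * b) (e * f) := by
    unfold S
    refine Finset.sum_congr rfl fun a _ => Finset.sum_congr rfl fun b _ => ?_
    rw [sum4_comm]
    refine Finset.sum_congr rfl fun c _ => Finset.sum_congr rfl fun d _ =>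
      Finset.sum_congr rfl fun e _ => Finset.sum_congr rfl fun f _ => ?_
    rw [dl_sub]
  apply mul_left_cancel₀ (pow_ne_zero 6 hp0)
  rw [h6, h7]
  refine h5.trans ?_
  ring

end
end Cnt
namespace Cnt
section
variable (R : Type) [CommRing R] [Fintype R]

lemma charpoly_eq_iff [Nontrivial R] (A B : Matrix (Fin 2) (Fin 2) R) :
    A.charpoly = B.charpoly ↔ A.trace = B.trace ∧ A.det = B.det := by
  constructor
  · intro h
    rw [Matrix.trace_eq_neg_charpoly_coeff, Matrix.trace_eq_neg_charpoly_coeff,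
      Matrix.det_eq_sign_charpoly_coeff, Matrix.det_eq_sign_charpoly_coeff, h]
    exact ⟨rfl, rfl⟩
  · rintro ⟨h1, h2⟩
    rw [Matrix.charpoly_fin_two, Matrix.charpoly_fin_two, h1, h2]

lemma isUnit_det_GL (g : GL (Fin 2) R) : IsUnit (g : Matrix (Fin 2) (Fin 2) R).det :=
  (Matrix.isUnit_iff_isUnit_det _).1 g.isUnit

lemma mk_val (A : Matrix (Fin 2) (Fin 2) R) (h : IsUnit A.det) :
    ((Matrix.GeneralLinearGroup.mk'' A h : GL (Fin 2) R) : Matrix (Fin 2) (Fin 2) R) = A := rfl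

noncomputable def equivT [Nontrivial R] : {x : R × R × R × R × R × R × R //
      IsUnit (x.1 * (x.1 + x.2.1 + x.2.2.1) - x.2.2.2.1 * x.2.2.2.2.1) ∧
      x.2.1 * x.2.2.1 + x.2.2.2.1 * x.2.2.2.2.1 = x.2.2.2.2.2.1 * x.2.2.2.2.2.2} ≃
    {p : GL (Fin 2) R × GL (Fin 2) R |
          Matrix.charpoly (p.1 : Matrix (Fin 2) (Fin 2) R) =
            Matrix.charpoly (p.2 : Matrix (Fin 2) (Fin 2) R)} :=
  Equiv.ofBijective (fun ⟨(s, u, v, b, c, b', c'), h1, h2⟩ =>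
    ⟨(Matrix.GeneralLinearGroup.mk'' !![s + u + v, b; c, s] (by
        rw [Matrix.det_fin_two_of]; simp only at h1; convert h1 using 1; ring),
      Matrix.GeneralLinearGroup.mk'' !![s + v, b'; c', s + u] (by
        rw [Matrix.det_fin_two_of]; simp only at h1 h2; convert h1 using 1
        linear_combination h2)), by
      simp only [Set.mem_ofPred_eq]
      rw [charpoly_eq_iff]
      simp only at h2
      simp only [mk_val, Matrix.det_fin_two_of,
        Matrix.trace_fin_two_of]
      exact ⟨by ring, by linear_combination -h2⟩⟩) (by
    constructor
    · rintro ⟨⟨s, u, v, b, c, b', c'⟩, h1, h2⟩ ⟨⟨s1, u1, v1, b1, c1, b1', c1'⟩, h3, h4⟩ h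
      simp only [Subtype.mk.injEq, Prod.mk.injEq] at h
      obtain ⟨ha, hb⟩ := h
      have ha := congrArg (fun g : GL (Fin 2) R => (g : Matrix (Fin 2) (Fin 2) R)) ha
      have hb := congrArg (fun g : GL (Fin 2) R => (g : Matrix (Fin 2) (Fin 2) R)) hb
      simp only [mk_val] at ha hb
      have a00 := congrFun (congrFun ha 0) 0
      have a01 := congrFun (congrFun ha 0) 1
      have a10 := congrFun (congrFun ha 1) 0
      have a11 := congrFun (congrFun ha 1) 1
      have b00 := congrFun (congrFun hb 0) 0
      have b01 := congrFun (congrFun hb 0) 1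
      have b10 := congrFun (congrFun hb 1) 0
      have b11 := congrFun (congrFun hb 1) 1
      simp at a00 a01 a10 a11 b00 b01 b10 b11
      subst a01 a10 a11 b01 b10
      simp only [add_right_inj] at b00 b11
      subst b00 b11
      rfl
    · rintro ⟨⟨g, g'⟩, h⟩
      have hd := isUnit_det_GL R g
      simp only [Set.mem_ofPred_eq] at h
      rw [charpoly_eq_iff, Matrix.det_fin_two, Matrix.det_fin_two, Matrix.trace_fin_two,
        Matrix.trace_fin_two] at h
      rw [Matrix.det_fin_two] at hd
      obtain ⟨ht, hh⟩ := h
      refine ⟨⟨(g 1 1, g' 1 1 - g 1 1, g' 0 0 - g 1 1, g 0 1, g 1 0, g' 0 1, g' 1 0), ?_, ?_⟩, ?_⟩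
      · simp only
        convert hd using 1
        linear_combination -(g.1 1 1) * ht
      · simp only
        linear_combination (g.1 1 1) * ht - hh
      · apply Subtype.ext
        apply Prod.ext
        · apply Units.ext
          ext i j
          fin_cases i <;> fin_cases j <;> simp [mk_val]
          linear_combination -ht
        · apply Units.ext
          ext i j
          fin_cases i <;> fin_cases j <;> simp [mk_val])

noncomputable def equivD : {x : R × R × R × R × R × R × R × R //
      IsUnit (x.1 * x.2.1 - x.2.2.1 * x.2.2.2.1) ∧
      x.1 * x.2.1 - x.2.2.1 * x.2.2.2.1 =
       x.2.2.2.2.1 * x.2.2.2.2.2.1 - x.2.2.2.2.2.2.1 * x.2.2.2.2.2.2.2} ≃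
    {p : GL (Fin 2) R × GL (Fin 2) R |
          (p.1 : Matrix (Fin 2) (Fin 2) R).det = (p.2 : Matrix (Fin 2) (Fin 2) R).det} :=
  Equiv.ofBijective (fun ⟨(s, p, b, c, s', p', b', c'), h1, h2⟩ =>
    ⟨(Matrix.GeneralLinearGroup.mk'' !![s, b; c, p] (by
        rw [Matrix.det_fin_two_of]; exact h1),
      Matrix.GeneralLinearGroup.mk'' !![s', b'; c', p'] (by
        rw [Matrix.det_fin_two_of]; simp only at h1 h2; rw [← h2]; exact h1)), by
      simp only [Set.mem_ofPred_eq]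
      simp only at h2
      simp only [mk_val, Matrix.det_fin_two_of]
      exact h2⟩) (by
    constructor
    · rintro ⟨⟨s, u, b, c, s', u', b', c'⟩, h1, h2⟩ ⟨⟨s1, u1, b1, c1, s1', u1', b1', c1'⟩, h3, h4⟩ h
      simp only [Subtype.mk.injEq, Prod.mk.injEq] at h
      obtain ⟨ha, hb⟩ := h
      have ha := congrArg (fun g : GL (Fin 2) R => (g : Matrix (Fin 2) (Fin 2) R)) ha
      have hb := congrArg (fun g : GL (Fin 2) R => (g : Matrix (Fin 2) (Fin 2) R)) hb
      simp only [mk_val] at ha hb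
      have a00 := congrFun (congrFun ha 0) 0
      have a01 := congrFun (congrFun ha 0) 1
      have a10 := congrFun (congrFun ha 1) 0
      have a11 := congrFun (congrFun ha 1) 1
      have b00 := congrFun (congrFun hb 0) 0
      have b01 := congrFun (congrFun hb 0) 1
      have b10 := congrFun (congrFun hb 1) 0
      have b11 := congrFun (congrFun hb 1) 1
      simp at a00 a01 a10 a11 b00 b01 b10 b11
      subst a00 a01 a10 a11 b00 b11 b01 b10
      rfl
    · rintro ⟨⟨g, g'⟩, h⟩
      have hd := isUnit_det_GL R g
      simp only [Set.mem_ofPred_eq] at h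
      rw [Matrix.det_fin_two, Matrix.det_fin_two] at h
      rw [Matrix.det_fin_two] at hd
      refine ⟨⟨(g 0 0, g 1 1, g 0 1, g 1 0, g' 0 0, g' 1 1, g' 0 1, g' 1 0), hd, h⟩, ?_⟩
      apply Subtype.ext
      apply Prod.ext
      · apply Units.ext
        ext i j
        fin_cases i <;> fin_cases j <;> simp [mk_val]
      · apply Units.ext
        ext i j
        fin_cases i <;> fin_cases j <;> simp [mk_val])

lemma ind_one {x y z : R} (h : IsUnit x ∧ y = z) : U x * dl y z = 1 := by
  simp [U, dl, h.1, h.2]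

lemma ind_zero {x y z : R} (h : ¬ (IsUnit x ∧ y = z)) : U x * dl y z = 0 := by
  by_cases hx : IsUnit x
  · have : ¬ y = z := fun h' => h ⟨hx, h'⟩
    simp [dl, this]
  · simp [U, hx]

lemma card_T [Nontrivial R] : (Nat.card {p : GL (Fin 2) R × GL (Fin 2) R |
          Matrix.charpoly (p.1 : Matrix (Fin 2) (Fin 2) R) =
            Matrix.charpoly (p.2 : Matrix (Fin 2) (Fin 2) R)} : ℝ) = T R := by
  rw [← Nat.card_congr (equivT R)]
  refine (card_eq_sum _ (fun x => U (x.1 * (x.1 + x.2.1 + x.2.2.1) - x.2.2.2.1 * x.2.2.2.2.1) *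
    dl (x.2.1 * x.2.2.1 + x.2.2.2.1 * x.2.2.2.2.1) (x.2.2.2.2.2.1 * x.2.2.2.2.2.2))
    ?_ ?_).trans ?_
  · exact fun x hx => ind_one R hx
  · exact fun x hx => ind_zero R hx
  simp only [Fintype.sum_prod_type, T]

lemma card_D : (Nat.card {p : GL (Fin 2) R × GL (Fin 2) R |
          (p.1 : Matrix (Fin 2) (Fin 2) R).det = (p.2 : Matrix (Fin 2) (Fin 2) R).det} : ℝ) = D R := by
  rw [← Nat.card_congr (equivD R)]
  refine (card_eq_sum _ (fun x => U (x.1 * x.2.1 - x.2.2.1 * x.2.2.2.1) *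
    dl (x.1 * x.2.1 - x.2.2.1 * x.2.2.2.1)
       (x.2.2.2.2.1 * x.2.2.2.2.2.1 - x.2.2.2.2.2.2.1 * x.2.2.2.2.2.2.2))
    ?_ ?_).trans ?_
  · exact fun x hx => ind_one R hx
  · exact fun x hx => ind_zero R hx
  simp only [Fintype.sum_prod_type, D]
end

lemma lim_rec (r a : ℝ) (hr0 : 0 < r) (hr : r < 1) (x : ℕ → ℝ)
    (h : ∀ k, x (k+2) - a = r ^ 2 * (x k - a)) : Tendsto x atTop (nhds a) := by
  set C := |x 0 - a| + |x 1 - a| / r with hC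
  have hb : ∀ k, |x k - a| ≤ C * r ^ k ∧ |x (k+1) - a| ≤ C * r ^ (k+1) := by
    intro k
    induction k with
    | zero =>
      constructor
      · simp only [pow_zero, mul_one, hC]
        have : 0 ≤ |x 1 - a| / r := by positivity
        linarith
      · have : C * r ^ (0+1) = |x 0 - a| * r + |x 1 - a| := by
          rw [hC, zero_add, pow_one]; field_simp
        rw [this]
        have : 0 ≤ |x 0 - a| * r := by positivity
        simpa using this
    | succ k ih =>
      refine ⟨ih.2, ?_⟩
      rw [show k + 1 + 1 = k + 2 from rfl, h k, abs_mul, abs_of_pos (by positivity)]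
      have := mul_le_mul_of_nonneg_left ih.1 (show 0 ≤ r ^ 2 by positivity)
      refine this.trans (le_of_eq ?_)
      ring
  rw [tendsto_iff_dist_tendsto_zero]
  refine squeeze_zero (g := fun k => C * r ^ k) (fun _ => dist_nonneg) (fun k => by rw [Real.dist_eq]; exact (hb k).1) ?_
  have := (tendsto_pow_atTop_nhds_zero_of_lt_one hr0.le hr).const_mul C
  simpa using this

lemma S_lim (p : ℕ) [hp : Fact p.Prime] :
    Tendsto (fun k => S (ZMod (p ^ k)) / (p:ℝ) ^ (5 * k)) atTop
      (nhds (((p:ℝ)^2 + p + 1) / (p * (p + 1)))) := by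
  have h1 : (1:ℝ) < p := by exact_mod_cast hp.out.one_lt
  have h0 : (0:ℝ) < p := by linarith
  apply lim_rec (((p:ℝ)^2)⁻¹) _ (by positivity) (inv_lt_one_of_one_lt₀ (by nlinarith))
  intro k
  have e := S_eq (R := ZMod (p ^ (k+2)))
  rw [N6_val, qq_val, ph_val p (k+1), nn_val p (k+1)] at e
  rw [e]
  have e5 : (p:ℝ) ^ (5 * k) = ((p:ℝ) ^ k) ^ 5 := by rw [← pow_mul, mul_comm]
  have e6 : (p:ℝ) ^ (5 * (k + 2)) = ((p:ℝ) ^ k) ^ 5 * p ^ 10 := by rw [← pow_mul]; ring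
  rw [e5, e6, pow_succ, show (p:ℝ) ^ (k+2) = p ^ k * p ^ 2 by ring]
  have hn : (p:ℝ) ^ k ≠ 0 := by positivity
  generalize (p:ℝ) ^ k = n at *
  generalize S (ZMod (p ^ k)) = s at *
  field_simp
  ring

end Cnt

/-- For an odd prime `ℓ`, the real sequence `k ↦ ℓᵏ · #𝒜ᵗ_{ℓᵏ,S} / #𝒜_{ℓᵏ,S}`
converges to `ℓ²(ℓ³ + ℓ² − ℓ − 2)/((ℓ² − 1)²(ℓ + 1))`. -/
theorem stmt_7 (ℓ : ℕ) (hℓ : ℓ.Prime) (hodd : ℓ ≠ 2) :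
    Tendsto (fun k : ℕ =>
      ((ℓ : ℝ) ^ k *
        (Nat.card {p : GL (Fin 2) (ZMod (ℓ ^ k)) × GL (Fin 2) (ZMod (ℓ ^ k)) |
          Matrix.charpoly (p.1 : Matrix (Fin 2) (Fin 2) (ZMod (ℓ ^ k))) =
            Matrix.charpoly (p.2 : Matrix (Fin 2) (Fin 2) (ZMod (ℓ ^ k)))} : ℝ)) /
        (Nat.card {p : GL (Fin 2) (ZMod (ℓ ^ k)) × GL (Fin 2) (ZMod (ℓ ^ k)) |
          (p.1 : Matrix (Fin 2) (Fin 2) (ZMod (ℓ ^ k))).det =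
            (p.2 : Matrix (Fin 2) (Fin 2) (ZMod (ℓ ^ k))).det} : ℝ))
      atTop
      (nhds ((ℓ : ℝ) ^ 2 * ((ℓ : ℝ) ^ 3 + (ℓ : ℝ) ^ 2 - ℓ - 2) /
        ((((ℓ : ℝ) ^ 2 - 1)) ^ 2 * ((ℓ : ℝ) + 1)))) := by
  have : Fact ℓ.Prime := ⟨hℓ⟩
  have h1 : (1:ℝ) < ℓ := by exact_mod_cast hℓ.one_lt
  have h0 : (0:ℝ) < ℓ := by linarith
  rw [← tendsto_add_atTop_iff_nat 2]
  have key : ∀ k : ℕ, (fun k : ℕ =>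
      ((ℓ : ℝ) ^ k *
        (Nat.card {p : GL (Fin 2) (ZMod (ℓ ^ k)) × GL (Fin 2) (ZMod (ℓ ^ k)) |
          Matrix.charpoly (p.1 : Matrix (Fin 2) (Fin 2) (ZMod (ℓ ^ k))) =
            Matrix.charpoly (p.2 : Matrix (Fin 2) (Fin 2) (ZMod (ℓ ^ k)))} : ℝ)) /
        (Nat.card {p : GL (Fin 2) (ZMod (ℓ ^ k)) × GL (Fin 2) (ZMod (ℓ ^ k)) |
          (p.1 : Matrix (Fin 2) (Fin 2) (ZMod (ℓ ^ k))).det =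
            (p.2 : Matrix (Fin 2) (Fin 2) (ZMod (ℓ ^ k))).det} : ℝ)) (k + 2) =
      ((ℓ:ℝ) ^ 5 - ℓ ^ 3 - ℓ ^ 2 - 1 + ℓ * (Cnt.S (ZMod (ℓ ^ k)) / (ℓ:ℝ) ^ (5 * k))) /
        (ℓ * ((ℓ - 1) ^ 2 * (ℓ + 1) ^ 2)) := by
    intro k
    simp only
    rw [Cnt.card_T (ZMod (ℓ ^ (k+2))), Cnt.card_D (ZMod (ℓ ^ (k+2))), Cnt.T_eq, Cnt.D_eq,
      Cnt.X_eq, Cnt.W_eq, Cnt.G_eq, Cnt.N6_val, Cnt.qq_val, Cnt.ph_val ℓ (k+1), Cnt.nn_val ℓ (k+1)]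
    have e5 : (ℓ:ℝ) ^ (5 * k) = ((ℓ:ℝ) ^ k) ^ 5 := by rw [← pow_mul, mul_comm]
    rw [e5, show (ℓ:ℝ) ^ (k+2) = ℓ ^ k * ℓ ^ 2 by ring, show (ℓ:ℝ) ^ (k+1) = ℓ ^ k * ℓ by ring]
    have hn : (ℓ:ℝ) ^ k ≠ 0 := by positivity
    generalize (ℓ:ℝ) ^ k = n at *
    generalize Cnt.S (ZMod (ℓ ^ k)) = s at *
    have h2 : (ℓ:ℝ) - 1 ≠ 0 := by linarith
    have h3 : (ℓ:ℝ) + 1 ≠ 0 := by linarith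
    have h4 : n * (ℓ:ℝ) ^ 2 + n * ℓ = n * ℓ * (ℓ + 1) := by ring
    have h5 : (n * (ℓ:ℝ) ^ 2) ^ 2 * (n * ℓ * (ℓ - 1)) ^ 2 + n * ℓ * (n * ℓ ^ 2) * (n * ℓ * (ℓ - 1)) ^ 2
      = n ^ 4 * ℓ ^ 5 * (ℓ - 1) ^ 2 * (ℓ + 1) := by ring
    rw [h4, h5]
    field_simp
    ring
  refine Tendsto.congr (fun k => (key k).symm) ?_
  have L := (((Cnt.S_lim ℓ).const_mul (ℓ:ℝ)).const_add ((ℓ:ℝ) ^ 5 - ℓ ^ 3 - ℓ ^ 2 - 1)).div_const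
    ((ℓ:ℝ) * ((ℓ - 1) ^ 2 * (ℓ + 1) ^ 2))
  convert L using 2
  have h2 : (ℓ:ℝ) - 1 ≠ 0 := by linarith
  have h3 : (ℓ:ℝ) + 1 ≠ 0 := by linarith
  have h4 : (ℓ:ℝ) ^ 2 - 1 = (ℓ - 1) * (ℓ + 1) := by ring
  rw [h4]
  field_simp
  ring
end
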